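/- arXiv:2504.00177 — 7 statements merged into one kernel-verified Lean document; each statement's English description precedes it below -/
import Mathlib

section
/- Let p be an integer and let Γ = B(2p, 2p+2) = ⟨a, t ∣ t a^{2p} t⁻¹ = a^{2p+2}⟩. Let φ : Γ → ℤ/2 be the group homomorphism determined by φ(a) = 1 and φ(t) = 0 (well defined since the relator has exponent sum −2 in a and 0 in t), and let Γ' = ker φ. Then Γ' has index 2 in Γ and the abelianization of Γ' is isomorphic to ℤ × ℤ, the free abelian group of rank 2. -/
/-- The relator `t a^m t⁻¹ a^{-n}` of the Baumslag–Solitar group, in the free group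
on two generators, where `a` is `FreeGroup.of 0` and `t` is `FreeGroup.of 1`. -/
def BSRel (m n : ℤ) : FreeGroup (Fin 2) :=
  FreeGroup.of 1 * FreeGroup.of 0 ^ m * (FreeGroup.of 1)⁻¹ * FreeGroup.of 0 ^ (-n)

/-- The Baumslag–Solitar group `B(m,n) = ⟨a, t ∣ t a^m t⁻¹ = a^n⟩`. -/
abbrev BS (m n : ℤ) : Type :=
  PresentedGroup ({BSRel m n} : Set (FreeGroup (Fin 2)))

/-!
Let `d = |n - m|` divide `m`, and let `K` be the kernel of the map `B(m, n) → ℤ/d` with `a ↦ 1` and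
`t ↦ 0`. In `B(m, n) / [K, K]` the elements `t` and `a ^ m` of `K` commute, so the relation becomes
`a ^ d = 1`; moreover the conjugates of `t` commute with each other. These are the defining
relations of the wreath product `ℤ ≀ ℤ/d`, with `a` generating `ℤ/d` and `t` a basis vector of the
base, so the corresponding map `B(m, n) → ℤ ≀ ℤ/d` has kernel inside `[K, K]`. Since `K` is the
preimage of the base, its abelianization is the base, a free abelian group of rank `d`.
-/

open Multiplicative SemidirectProduct
open scoped IsMulCommutative

section Abelianization

variable {G H : Type*} [Group G] [Group H]

lemma commute_mk'_commutator {K L : Subgroup G} [K.Normal] [L.Normal] {x y : G} (hx : x ∈ K)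
    (hy : y ∈ L) : Commute (QuotientGroup.mk' ⁅K, L⁆ x) (QuotientGroup.mk' ⁅K, L⁆ y) := by
  rw [← commutatorElement_eq_one_iff_commute, ← map_commutatorElement]
  exact (QuotientGroup.eq_one_iff _).mpr (Subgroup.commutator_mem_commutator hx hy)

instance isMulCommutative_map_mk'_commutator (K : Subgroup G) [K.Normal] :
    IsMulCommutative (K.map (QuotientGroup.mk' ⁅K, K⁆)) := by
  refine .of_setLike_mul_comm ?_
  rintro _ ⟨x, hx, rfl⟩ _ ⟨y, hy, rfl⟩
  exact commute_mk'_commutator hx hy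

lemma ker_subgroupComap_eq_commutator {f : G →* H} {A : Subgroup H} [IsMulCommutative A]
    (hker : f.ker ≤ ⁅A.comap f, A.comap f⁆) :
    (f.subgroupComap A).ker = commutator (A.comap f) := by
  refine le_antisymm (fun g hg => ?_) (Abelianization.commutator_subset_ker _)
  have hg' : (g : G) ∈ ⁅A.comap f, A.comap f⁆ := hker (congrArg A.subtype (MonoidHom.mem_ker.mp hg))
  rw [← Subgroup.map_subtype_commutator] at hg'
  exact (Subgroup.mem_map_iff_mem (Subgroup.subtype_injective _)).mp hg'

/-- The abelianization of the preimage of a commutative subgroup `A` under a surjection is `A`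
itself, provided the kernel of the surjection consists of products of commutators of that
preimage. -/
noncomputable def abelianizationComapEquiv {f : G →* H} (hf : Function.Surjective f)
    (A : Subgroup H) [IsMulCommutative A] (hker : f.ker ≤ ⁅A.comap f, A.comap f⁆) :
    Abelianization (A.comap f) ≃* A :=
  (QuotientGroup.quotientMulEquivOfEq (ker_subgroupComap_eq_commutator hker).symm).trans
    (QuotientGroup.quotientKerEquivOfSurjective _
      (f.subgroupComap_surjective_of_surjective A hf))

end Abelianization

section ZModHom

variable {d : ℕ} {G : Type*} [Group G]

lemma ofAdd_one_zpow {R : Type*} [AddGroupWithOne R] (k : ℤ) :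
    (ofAdd 1 : Multiplicative R) ^ k = ofAdd (k : R) := by
  rw [← ofAdd_zsmul, zsmul_one]

lemma exists_ofAdd_one_zpow_eq (x : Multiplicative (ZMod d)) : ∃ k : ℤ, ofAdd 1 ^ k = x := by
  obtain ⟨k, hk⟩ := ZMod.intCast_surjective x.toAdd
  exact ⟨k, by rw [ofAdd_one_zpow, hk, ofAdd_toAdd]⟩

lemma ofAdd_one_zpow_eq_one {k : ℤ} (hk : (d : ℤ) ∣ k) :
    (ofAdd 1 : Multiplicative (ZMod d)) ^ k = 1 := by
  rw [ofAdd_one_zpow, (ZMod.intCast_zmod_eq_zero_iff_dvd k d).mpr hk, ofAdd_zero]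

/-- The homomorphism from the cyclic group `ℤ/d` that sends the generator to a given element
whose `d`-th power is trivial. -/
def zmodPowersHom (g : G) (hg : g ^ d = 1) : Multiplicative (ZMod d) →* G :=
  AddMonoidHom.toMultiplicativeLeft
    (ZMod.lift d ⟨zmultiplesHom (Additive G) (Additive.ofMul g), by
      rw [zmultiplesHom_apply, natCast_zsmul, ← ofMul_pow, hg, ofMul_one]⟩)

@[simp]
lemma zmodPowersHom_ofAdd_one (g : G) (hg : g ^ d = 1) : zmodPowersHom g hg (ofAdd 1) = g := by
  rw [← Int.cast_one]
  simp [zmodPowersHom, -Int.cast_one]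

end ZModHom

namespace IntWreath

variable {Q : Type*}

/-- The element of the free abelian group `Q →₀ ℤ`, written multiplicatively, that is the basis
vector indexed by `q`. -/
noncomputable def basis (q : Q) : Multiplicative (Q →₀ ℤ) := ofAdd (Finsupp.single q 1)

lemma base_hom_ext {M : Type*} [Monoid M] {f g : Multiplicative (Q →₀ ℤ) →* M}
    (h : ∀ q, f (basis q) = g (basis q)) : f = g :=
  Finsupp.mulHom_ext' fun q => MonoidHom.ext_mint (h q)

lemma closure_range_basis : Subgroup.closure (Set.range (basis (Q := Q))) = ⊤ := by
  refine (Subgroup.eq_top_iff' _).mpr fun x => ?_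
  induction x with | ofAdd x
  induction x using Finsupp.induction_linear with
  | zero => exact Subgroup.one_mem _
  | add x y hx hy => exact Subgroup.mul_mem _ hx hy
  | single q k =>
    have hpow : ofAdd (Finsupp.single q k) = basis q ^ k := by simp [basis, ← ofAdd_zsmul]
    exact hpow ▸ Subgroup.zpow_mem _ (Subgroup.subset_closure (Set.mem_range_self q)) k

/-- The homomorphism from a free abelian group, written multiplicatively, that has prescribed
values on the basis. -/
noncomputable def baseLift {A : Type*} [CommGroup A] (v : Q → A) :
    Multiplicative (Q →₀ ℤ) →* A :=
  AddMonoidHom.toMultiplicativeLeft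
    (Finsupp.liftAddHom fun q => zmultiplesHom (Additive A) (Additive.ofMul (v q)))

@[simp]
lemma baseLift_basis {A : Type*} [CommGroup A] (v : Q → A) (q : Q) :
    baseLift v (basis q) = v q := by
  simp [baseLift, basis]

variable [Group Q]

variable (Q) in
/-- The left regular action of `Q` on the free abelian group with basis `Q`. -/
noncomputable def regularAction : Q →* MulAut (Multiplicative (Q →₀ ℤ)) where
  toFun q := (Finsupp.domCongr (Equiv.mulLeft q)).toMultiplicative
  map_one' := by ext; simp [← Equiv.Perm.inv_def]
  map_mul' q r := by ext; simp [← Equiv.Perm.inv_def]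

@[simp]
lemma regularAction_basis (q r : Q) : regularAction Q q (basis r) = basis (q * r) := by
  simp [regularAction, basis]

end IntWreath

/-- The restricted wreath product `ℤ ≀ Q`: its base is the free abelian group with basis `Q`,
written multiplicatively, on which `Q` acts by left translation of the basis. -/
abbrev IntWreath (Q : Type*) [Group Q] : Type _ :=
  Multiplicative (Q →₀ ℤ) ⋊[IntWreath.regularAction Q] Q

namespace IntWreath

variable {Q : Type*} [Group Q]

lemma subgroup_eq_top {S : Subgroup (IntWreath Q)} (hbasis : inl (basis 1) ∈ S)
    (hinr : ∀ q, inr q ∈ S) : S = ⊤ := by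
  have hbasis' (q : Q) : inl (basis q) ∈ S := by
    rw [← mul_one q, ← regularAction_basis, inl_aut]
    exact S.mul_mem (S.mul_mem (hinr q) hbasis) (hinr q⁻¹)
  have hinl : S.comap inl = ⊤ := by
    rw [eq_top_iff, ← closure_range_basis, Subgroup.closure_le]
    exact Set.range_subset_iff.mpr hbasis'
  refine (Subgroup.eq_top_iff' S).mpr fun x => ?_
  rw [← inl_left_mul_inr_right x]
  exact S.mul_mem (hinl.ge (Subgroup.mem_top x.left)) (hinr x.right)

variable {G : Type*} [Group G]

/-- The homomorphism out of `ℤ ≀ Q` that is `σ` on `Q` and sends the basis vector at `1` to an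
element `t` of a commutative normal subgroup, which ensures that the conjugates of `t` commute. -/
noncomputable def lift (σ : Q →* G) {A : Subgroup G} [A.Normal] [IsMulCommutative A] (t : A) :
    IntWreath Q →* G :=
  SemidirectProduct.lift (A.subtype.comp (baseLift fun q => MulAut.conjNormal (σ q) t)) σ
    fun q => base_hom_ext fun r => by simp [mul_assoc]

variable (σ : Q →* G) {A : Subgroup G} [A.Normal] [IsMulCommutative A] (t : A)

@[simp]
lemma lift_inl_basis_one : lift σ t (inl (basis 1)) = t := by
  simp [lift]

@[simp]
lemma lift_inr (q : Q) : lift σ t (inr q) = σ q :=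
  SemidirectProduct.lift_inr _ _ _ q

end IntWreath

namespace BS

/-- The generator `a` of `B(m, n)`. -/
abbrev a (m n : ℤ) : BS m n := PresentedGroup.of 0

/-- The stable letter `t` of `B(m, n)`. -/
abbrev t (m n : ℤ) : BS m n := PresentedGroup.of 1

variable {m n : ℤ} {G : Type*} [Group G]

lemma relation : t m n * a m n ^ m * (t m n)⁻¹ = a m n ^ n := by
  rw [← mul_inv_eq_one, ← zpow_neg]
  exact PresentedGroup.one_of_mem (Set.mem_singleton (BSRel m n))

lemma hom_ext {f g : BS m n →* G} (ha : f (a m n) = g (a m n))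
    (ht : f (t m n) = g (t m n)) : f = g :=
  PresentedGroup.ext (Fin.forall_fin_two.mpr ⟨ha, ht⟩)

lemma map_zpow_sub_eq_one (f : BS m n →* G)
    (h : Commute (f (t m n)) (f (a m n ^ m))) : f (a m n ^ (n - m)) = 1 := by
  rw [zpow_sub, ← relation, map_mul, map_mul, map_mul, h.eq, map_inv, map_inv,
    mul_inv_cancel_right, mul_inv_cancel]

/-- The homomorphism out of `B(m, n)` given by a pair of elements satisfying the relation. -/
def lift (x y : G) (h : y * x ^ m * y⁻¹ = x ^ n) : BS m n →* G :=
  PresentedGroup.toGroup (f := ![x, y]) (by rintro _ rfl; simp [BSRel, h])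

variable {x y : G} (h : y * x ^ m * y⁻¹ = x ^ n)

@[simp]
lemma lift_a : lift x y h (a m n) = x :=
  PresentedGroup.toGroup.of _

@[simp]
lemma lift_t : lift x y h (t m n) = y :=
  PresentedGroup.toGroup.of _

variable {d : ℕ}

/-- The homomorphism from `B(m, n)` to `ℤ ≀ ℤ/d`, for a common divisor `d` of `m` and `n`, that
sends `a` to the generator of `ℤ/d` and `t` to a basis vector of the base. -/
noncomputable def toIntWreath (hm : (d : ℤ) ∣ m) (hn : (d : ℤ) ∣ n) :
    BS m n →* IntWreath (Multiplicative (ZMod d)) :=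
  lift (inr (ofAdd (1 : ZMod d))) (inl (IntWreath.basis 1)) (by
    rw [← MonoidHom.map_zpow, ← MonoidHom.map_zpow, ofAdd_one_zpow_eq_one hm,
      ofAdd_one_zpow_eq_one hn, map_one, mul_one, mul_inv_cancel])

variable (hm : (d : ℤ) ∣ m) (hn : (d : ℤ) ∣ n)

lemma toIntWreath_surjective : Function.Surjective (toIntWreath hm hn) := by
  have ha : inr (ofAdd 1) ∈ (toIntWreath hm hn).range := ⟨a m n, lift_a _⟩
  have ht : inl (IntWreath.basis 1) ∈ (toIntWreath hm hn).range := ⟨t m n, lift_t _⟩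
  refine MonoidHom.range_eq_top.mp (IntWreath.subgroup_eq_top ht fun q => ?_)
  obtain ⟨k, rfl⟩ := exists_ofAdd_one_zpow_eq q
  rw [map_zpow]
  exact Subgroup.zpow_mem _ ha k

lemma rightHom_comp_toIntWreath {φ : BS m n →* Multiplicative (ZMod d)}
    (hφa : φ (a m n) = ofAdd 1) (hφt : φ (t m n) = ofAdd 0) :
    rightHom.comp (toIntWreath hm hn) = φ := by
  apply hom_ext <;> simp [toIntWreath, hφa, hφt]

lemma ker_toIntWreath_le_commutator (hd : n - m ∣ d) {K : Subgroup (BS m n)} [K.Normal]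
    (ha : a m n ^ m ∈ K) (ht : t m n ∈ K) :
    (toIntWreath hm hn).ker ≤ ⁅K, K⁆ := by
  set π := QuotientGroup.mk' ⁅K, K⁆ with hπ
  have ha_pow : π (a m n) ^ d = 1 := by
    obtain ⟨k, hk⟩ := hd
    rw [← zpow_natCast, hk, zpow_mul, ← map_zpow,
      map_zpow_sub_eq_one π (commute_mk'_commutator ht ha), one_zpow]
  let tImage : K.map π := ⟨π (t m n), Subgroup.mem_map_of_mem π ht⟩
  have hfactor : (IntWreath.lift (zmodPowersHom _ ha_pow) tImage).comp (toIntWreath hm hn) = π := by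
    apply hom_ext <;> simp [toIntWreath, tImage]
  rw [← QuotientGroup.ker_mk' ⁅K, K⁆, ← hπ, ← hfactor]
  intro g hg
  rw [MonoidHom.mem_ker, MonoidHom.comp_apply, hg, map_one]

end BS

/-- Finitely supported functions on a two-element type as pairs of values. -/
noncomputable def finsuppFinTwoAddEquiv (M : Type*) [AddCommGroup M] : (Fin 2 →₀ M) ≃+ M × M :=
  ((Finsupp.linearEquivFunOnFinite ℤ M (Fin 2)).trans (LinearEquiv.finTwoArrow ℤ M)).toAddEquiv

/-- For `d = 0`, so `m = n = 0`, the group is free on `a` and `t`, `ZMod 0` is `ℤ`, and index `0`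
means infinite index. -/
theorem stmt_4_general {m n : ℤ} {d : ℕ} (hm : (d : ℤ) ∣ m) (hd : (n - m).natAbs = d)
    (φ : BS m n →* Multiplicative (ZMod d))
    (hφa : φ (PresentedGroup.of 0) = ofAdd 1) (hφt : φ (PresentedGroup.of 1) = ofAdd 0) :
    φ.ker.index = d ∧ Nonempty (Abelianization φ.ker ≃* Multiplicative (ZMod d →₀ ℤ)) := by
  have hn : (d : ℤ) ∣ n := (dvd_sub_left hm).mp (Int.natCast_dvd.mpr hd.symm.dvd)
  have hright := BS.rightHom_comp_toIntWreath hm hn hφa hφt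
  have hsurj := BS.toIntWreath_surjective hm hn
  constructor
  · have hφ : Function.Surjective φ := hright ▸ rightHom_surjective.comp hsurj
    rw [Subgroup.index_ker, MonoidHom.range_eq_top.mpr hφ, Subgroup.card_top,
      Nat.card_congr toAdd, Nat.card_zmod]
  · have ha : BS.a m n ^ m ∈ φ.ker := by
      rw [MonoidHom.mem_ker, map_zpow, hφa, ofAdd_one_zpow_eq_one hm]
    have hker := BS.ker_toIntWreath_le_commutator hm hn (Int.dvd_natCast.mpr hd.dvd) ha hφt
    rw [← hright, ← MonoidHom.comap_ker, ← range_inl_eq_ker_rightHom] at hker ⊢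
    let reindex : (Multiplicative (ZMod d) →₀ ℤ) ≃+ (ZMod d →₀ ℤ) := Finsupp.domCongr toAdd
    exact ⟨(abelianizationComapEquiv hsurj _ hker).trans
      ((MonoidHom.ofInjective inl_injective).symm.trans reindex.toMultiplicative)⟩

theorem stmt_4 (p : ℤ)
    (φ : BS (2 * p) (2 * p + 2) →* Multiplicative (ZMod 2))
    (hφa : φ (PresentedGroup.of 0) = Multiplicative.ofAdd 1)
    (hφt : φ (PresentedGroup.of 1) = Multiplicative.ofAdd 0) :
    (MonoidHom.ker φ).index = 2 ∧
      Nonempty (Abelianization ↥(MonoidHom.ker φ) ≃* Multiplicative (ℤ × ℤ)) := by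
  obtain ⟨hindex, ⟨e⟩⟩ := stmt_4_general (dvd_mul_right 2 p) (by simp) φ hφa hφt
  exact ⟨hindex, ⟨e.trans (finsuppFinTwoAddEquiv ℤ).toMultiplicative⟩⟩
end

section
/- Let p be an integer and let Γ = B(2p+1, 2p+3) = ⟨a, t ∣ t a^{2p+1} t⁻¹ = a^{2p+3}⟩. Let φ : Γ → ℤ/2 be the group homomorphism determined by φ(a) = 0 and φ(t) = 1 (well defined since the relator has exponent sum −2 in a and 0 in t), and let Γ' = ker φ. Then Γ' has index 2 in Γ and the abelianization of Γ' is isomorphic to ℤ × ℤ/|8(p+1)|. -/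
/-!
Let `N` be the kernel of `B(m,n) → ℤ/k`, where `m` and `n` are coprime and `k ≠ 0`, and put
`d = |nᵏ - mᵏ|`. Conjugation by `tᵏ` takes `a ^ mᵏ` to `a ^ nᵏ`, so in `B(m,n)/[N,N]`, where
`tᵏ, a ∈ N` commute, `a` satisfies `aᵈ = 1`. Since `m` is invertible modulo `d`, the relation
`t aᵐ t⁻¹ = aⁿ` then becomes `t a t⁻¹ = aʷ` with `w = n/m` in `ℤ/d`. Hence the representation
`B(m,n) → ℤ/d ⋊ ℤ` with `a ↦ 1 ∈ ℤ/d` and `t ↦ 1 ∈ ℤ`, where `ℤ` acts through `w`, has its kernel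
inside `[N,N]`. It maps `N` onto `ℤ/d ⋊ kℤ`, which is the direct product `ℤ/d × kℤ` because
`wᵏ = 1`; so this product is the abelianization of `N`.
-/

/-- If `f` restricts to a map from `N` onto an abelian group `M` and kills nothing outside the
commutator subgroup of `N`, then `M` is the abelianization of `N`. -/
noncomputable def abelianizationEquivOfKerLe {G H M : Type*} [Group G] [Group H] [CommGroup M]
    (f : G →* H) (N : Subgroup G) (hf : f.ker ≤ ⁅N, N⁆) (e : N.map f ≃* M) :
    Abelianization N ≃* M :=
  let g : N →* M := e.toMonoidHom.comp (f.subgroupMap N)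
  have hg : Function.Surjective g := e.surjective.comp (f.subgroupMap_surjective N)
  have hker : commutator N = g.ker := by
    refine le_antisymm (Abelianization.commutator_subset_ker g) fun x hx => ?_
    have hfx : (x : G) ∈ f.ker := by simpa [g, Subtype.ext_iff] using hx
    have hmem : (x : G) ∈ (commutator N).map N.subtype := N.map_subtype_commutator ▸ hf hfx
    simpa using hmem
  (QuotientGroup.quotientMulEquivOfEq hker).trans (QuotientGroup.quotientKerEquivOfSurjective g hg)

lemma index_ker_of_apply_eq_ofAdd_one {G : Type*} [Group G] {k : ℕ}
    (φ : G →* Multiplicative (ZMod k)) {t : G} (ht : φ t = Multiplicative.ofAdd 1) :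
    φ.ker.index = k := by
  have hφ : Function.Surjective φ := fun x => by
    obtain ⟨i, hi⟩ := ZMod.intCast_surjective x.toAdd
    exact ⟨t ^ i, by rw [map_zpow, ht, ← ofAdd_zsmul, zsmul_one, hi, ofAdd_toAdd]⟩
  rw [Subgroup.index_ker, MonoidHom.range_eq_top.mpr hφ, Subgroup.card_top]
  exact Nat.card_zmod k

lemma exists_unit_mul_eq_of_pow_eq_pow {M : Type*} [CommMonoid M] {x y : M} {k : ℕ} (hx : IsUnit x)
    (hk : k ≠ 0) (h : x ^ k = y ^ k) : ∃ w : Mˣ, w * x = y ∧ w ^ k = 1 := by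
  have hy : IsUnit y := (isUnit_pow_iff hk).mp (h ▸ hx.pow k)
  refine ⟨hy.unit * hx.unit⁻¹, by simp [mul_assoc], ?_⟩
  rw [mul_pow, inv_pow, mul_inv_eq_one]
  exact Units.ext h.symm

lemma intCast_pow_eq_intCast_pow (m n : ℤ) (k : ℕ) :
    (m : ZMod (n ^ k - m ^ k).natAbs) ^ k = (n : ZMod (n ^ k - m ^ k).natAbs) ^ k := by
  rw [← Int.cast_pow, ← Int.cast_pow, ZMod.intCast_eq_intCast_iff_dvd_sub]
  exact Int.natAbs_dvd.mpr dvd_rfl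

lemma isUnit_intCast_zmod_pow_sub_pow {m n : ℤ} {k : ℕ} (hmn : IsCoprime m n)
    (hk : k ≠ 0) : IsUnit (m : ZMod (n ^ k - m ^ k).natAbs) := by
  have hcop : IsCoprime m (n ^ k - m ^ k) := by
    rw [← mul_pow_sub_one hk m, sub_eq_add_neg, ← mul_neg]
    exact hmn.pow_right.add_mul_left_right _
  rw [ZMod.coe_int_isUnit_iff_isCoprime, Int.natCast_natAbs]
  exact hcop.symm.abs_left

section Semiconj

variable {G : Type*} [Group G] {a t : G} {m n : ℤ}

lemma semiconjBy_pow_zpow_pow (h : SemiconjBy t (a ^ m) (a ^ n)) (k : ℕ) :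
    SemiconjBy (t ^ k) (a ^ m ^ k) (a ^ n ^ k) := by
  induction k with
  | zero => simp
  | succ k ih =>
    have hstep : SemiconjBy (t ^ k) (a ^ m ^ (k + 1)) (a ^ (m * n ^ k)) := by
      simpa only [pow_succ, mul_comm m, zpow_mul] using ih.zpow_right m
    have hlast : SemiconjBy t (a ^ (m * n ^ k)) (a ^ n ^ (k + 1)) := by
      simpa only [pow_succ', zpow_mul] using h.zpow_right (n ^ k)
    simpa only [pow_succ'] using hlast.mul_left hstep

lemma pow_natAbs_eq_one_of_semiconjBy_of_commute {k : ℕ} (h : SemiconjBy t (a ^ m) (a ^ n))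
    (hc : Commute (t ^ k) a) : a ^ (n ^ k - m ^ k).natAbs = 1 := by
  have heq : a ^ m ^ k = a ^ n ^ k :=
    mul_right_cancel ((hc.zpow_right (m ^ k)).eq.symm.trans (semiconjBy_pow_zpow_pow h k).eq)
  rw [pow_natAbs_eq_one, zpow_sub, heq, mul_inv_cancel]

lemma semiconjBy_zpow_of_pow_eq_one {d : ℕ} (ha : a ^ d = 1) (h : SemiconjBy t (a ^ m) (a ^ n))
    (hm : IsUnit (m : ZMod d)) {w : ℤ} (hw : (w * m : ZMod d) = n) : SemiconjBy t a (a ^ w) := by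
  have zpow_eq {i j : ℤ} (hij : (i : ZMod d) = j) : a ^ i = a ^ j := by
    rw [ZMod.intCast_eq_intCast_iff] at hij
    exact zpow_eq_zpow_iff_modEq.mpr
      (hij.of_dvd (Int.natCast_dvd_natCast.mpr (orderOf_dvd_of_pow_eq_one ha)))
  obtain ⟨r, hr⟩ := hm.exists_right_inv
  obtain ⟨l, rfl⟩ := ZMod.intCast_surjective r
  have ha_eq : (a ^ m) ^ l = a := by
    rw [← zpow_mul, zpow_eq (j := 1) (by simpa using hr), zpow_one]
  have haw_eq : (a ^ n) ^ l = a ^ w := by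
    rw [← zpow_mul]
    refine zpow_eq ?_
    rw [Int.cast_mul, ← hw, mul_assoc, hr, mul_one]
  simpa only [ha_eq, haw_eq] using h.zpow_right l

lemma semiconjBy_zpow_map_mulAut_zpow {N : Type*} [Group N] (f : N →* G) (α : MulAut N)
    (h : ∀ x, SemiconjBy t (f x) (f (α x))) (i : ℤ) (x : N) :
    SemiconjBy (t ^ i) (f x) (f ((α ^ i) x)) := by
  have hinv (y : N) : SemiconjBy t⁻¹ (f y) (f (α⁻¹ y)) := by
    simpa using (h (α⁻¹ y)).inv_symm_left
  induction i with
  | zero => simp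
  | succ i ih =>
    simpa only [zpow_one_add, add_comm _ (1 : ℤ), MulAut.mul_apply] using (h _).mul_left ih
  | pred i ih =>
    simpa only [zpow_add, zpow_neg_one, sub_eq_neg_add, MulAut.mul_apply] using (hinv _).mul_left ih

end Semiconj

section Action

open SemidirectProduct

variable {R : Type*} [Ring R]

/-- The action of `ℤ` on the additive group of `R` in which `1 ∈ ℤ` acts as multiplication by `w`.
Both groups are written multiplicatively, as `SemidirectProduct` requires. -/
def unitAction (w : Rˣ) : Multiplicative ℤ →* MulAut (Multiplicative R) :=
  zpowersHom _ ((MulAutMultiplicative R).symm (AddAut.mulLeft w))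

lemma unitAction_ofAdd (w : Rˣ) (i : ℤ) (r : R) :
    unitAction w (Multiplicative.ofAdd i) (Multiplicative.ofAdd r) =
      Multiplicative.ofAdd (↑(w ^ i) * r) := by
  rw [unitAction, zpowersHom_apply, ← map_zpow, ← map_zpow]
  rfl

lemma exists_semidirectProduct_zmod_hom {G : Type*} [Group G] {a t : G} {d : ℕ} {w : (ZMod d)ˣ}
    {v : ℤ} (ha : a ^ d = 1) (hv : (v : ZMod d) = w) (h : SemiconjBy t a (a ^ v)) :
    ∃ F : Multiplicative (ZMod d) ⋊[unitAction w] Multiplicative ℤ →* G,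
      F (inl (.ofAdd 1)) = a ∧ F (inr (.ofAdd 1)) = t := by
  let f : Multiplicative (ZMod d) →* G := AddMonoidHom.toMultiplicativeLeft
    (ZMod.lift d ⟨zmultiplesHom _ (.ofMul a), by simp [← ofMul_pow, ha]⟩)
  have hf (l : ℤ) : f (.ofAdd (l : ZMod d)) = a ^ l := by
    simp [f]
  have hstep (x : Multiplicative (ZMod d)) :
      SemiconjBy t (f x) (f (unitAction w (.ofAdd 1) x)) := by
    obtain ⟨l, hl⟩ := ZMod.intCast_surjective x.toAdd
    obtain rfl : x = .ofAdd (l : ZMod d) := by rw [hl, ofAdd_toAdd]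
    rw [unitAction_ofAdd, zpow_one, ← hv, ← Int.cast_mul, hf, hf, zpow_mul]
    exact h.zpow_right l
  have hact (i : Multiplicative ℤ) : unitAction w i = unitAction w (.ofAdd 1) ^ i.toAdd := by
    rw [← map_zpow, ← ofAdd_zsmul, zsmul_one, Int.cast_id, ofAdd_toAdd]
  refine ⟨SemidirectProduct.lift f (zpowersHom G t) fun i => ?_, ?_, ?_⟩
  · refine MonoidHom.ext fun x => ?_
    have hconj := semiconjBy_zpow_map_mulAut_zpow f _ hstep i.toAdd x
    rw [← hact] at hconj
    exact eq_mul_inv_of_mul_eq hconj.eq.symm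
  · simpa using hf 1
  · simp

/-- If `w ^ k = 1`, the subgroup `kℤ ≤ ℤ` acts trivially on `R`, so that `(i, r) ↦ (r, k i)` embeds
`ℤ × R` in `R ⋊ ℤ`. -/
def prodToSemidirect {w : Rˣ} {k : ℕ} (hwk : w ^ k = 1) :
    Multiplicative (ℤ × R) →* Multiplicative R ⋊[unitAction w] Multiplicative ℤ :=
  MonoidHom.mk' (fun x => ⟨.ofAdd x.toAdd.2, .ofAdd (k * x.toAdd.1)⟩) fun x y => by
    refine SemidirectProduct.ext ?_ ?_
    · rw [mul_left, unitAction_ofAdd, zpow_mul, zpow_natCast, hwk, one_zpow, Units.val_one, one_mul]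
      rfl
    · rw [mul_right, ← ofAdd_add, ← mul_add]
      rfl

variable {w : Rˣ} {k : ℕ} (hwk : w ^ k = 1)

lemma prodToSemidirect_injective (hk : k ≠ 0) : Function.Injective (prodToSemidirect hwk) := by
  intro x y hxy
  have hleft : x.toAdd.2 = y.toAdd.2 := congrArg (fun z => z.left.toAdd) hxy
  have hright : (k : ℤ) * x.toAdd.1 = k * y.toAdd.1 := congrArg (fun z => z.right.toAdd) hxy
  exact Multiplicative.toAdd.injective
    (Prod.ext (mul_left_cancel₀ (Nat.cast_ne_zero.mpr hk) hright) hleft)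

lemma mem_range_prodToSemidirect {x : Multiplicative R ⋊[unitAction w] Multiplicative ℤ} :
    x ∈ (prodToSemidirect hwk).range ↔ (k : ℤ) ∣ x.right.toAdd := by
  constructor
  · rintro ⟨y, rfl⟩
    exact dvd_mul_right _ _
  · rintro ⟨i, hi⟩
    exact ⟨.ofAdd (i, x.left.toAdd),
      SemidirectProduct.ext rfl (congrArg Multiplicative.ofAdd hi.symm)⟩

end Action

namespace BS

open SemidirectProduct

lemma semiconjBy_of_one (m n : ℤ) :
    SemiconjBy (.of 1 : BS m n) (.of 0 ^ m) (.of 0 ^ n) := by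
  have hrel : PresentedGroup.mk {BSRel m n} (BSRel m n) = 1 := PresentedGroup.one_of_mem rfl
  rw [SemiconjBy, ← mul_inv_eq_iff_eq_mul, ← mul_inv_eq_one, ← zpow_neg]
  exact hrel

variable {m n : ℤ}

section Ring

variable {R : Type*} [Ring R] (w : Rˣ) (hw : w * (m : R) = n)

/-- The homomorphism from `B(m,n)` to `R ⋊ ℤ` sending `a` to `1 ∈ R` and `t` to `1 ∈ ℤ`, where
`1 ∈ ℤ` acts on `R` as multiplication by `w`, a value of the fraction `n / m`. -/
def toSemidirect : BS m n →* Multiplicative R ⋊[unitAction w] Multiplicative ℤ :=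
  PresentedGroup.toGroup (f := ![inl (.ofAdd 1), inr (.ofAdd 1)]) <| by
    rintro _ rfl
    have hconj : inr (.ofAdd 1) * inl (.ofAdd (m : R)) * (inr (.ofAdd 1))⁻¹ =
        (inl (.ofAdd (n : R)) : Multiplicative R ⋊[unitAction w] Multiplicative ℤ) := by
      rw [← map_inv, ← inl_aut, unitAction_ofAdd, zpow_one, hw]
    simp only [BSRel, map_mul, map_zpow, map_inv, FreeGroup.lift_apply_of, Matrix.cons_val_zero,
      Matrix.cons_val_one]
    simp only [← map_zpow inl, ← ofAdd_zsmul, zsmul_one, hconj, ← map_mul, ← ofAdd_add]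
    simp

@[simp]
lemma toSemidirect_of_zero : toSemidirect w hw (.of 0) = inl (.ofAdd 1) := by
  simp [toSemidirect]

@[simp]
lemma toSemidirect_of_one : toSemidirect w hw (.of 1) = inr (.ofAdd 1) := by
  simp [toSemidirect]

lemma mem_ker_iff_dvd_right_toSemidirect {k : ℕ} (φ : BS m n →* Multiplicative (ZMod k))
    (hφa : φ (.of 0) = .ofAdd 0) (hφt : φ (.of 1) = .ofAdd 1) (g : BS m n) :
    g ∈ φ.ker ↔ (k : ℤ) ∣ (toSemidirect w hw g).right.toAdd := by
  have hφ : φ = ((Int.castAddHom (ZMod k)).toMultiplicative.comp rightHom).comp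
      (toSemidirect w hw) := by
    ext i
    fin_cases i
    · simp [hφa]
    · simp [hφt]
  rw [← ZMod.intCast_zmod_eq_zero_iff_dvd, MonoidHom.mem_ker, hφ]
  rfl

end Ring

section ZMod

variable {d : ℕ} (w : (ZMod d)ˣ) (hw : w * (m : ZMod d) = n)

lemma toSemidirect_surjective : Function.Surjective (toSemidirect w hw) := fun x => by
  obtain ⟨l, hl⟩ := ZMod.intCast_surjective x.left.toAdd
  refine ⟨.of 0 ^ l * .of 1 ^ x.right.toAdd, ?_⟩
  rw [map_mul, map_zpow, map_zpow, toSemidirect_of_zero, toSemidirect_of_one, ← map_zpow inl,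
    ← map_zpow inr, ← ofAdd_zsmul, ← ofAdd_zsmul, zsmul_one, zsmul_one, hl]
  exact inl_left_mul_inr_right x

lemma ker_toSemidirect_le {Q : Type*} [Group Q] (f : BS m n →* Q) (hm : IsUnit (m : ZMod d))
    (hf : f (.of 0) ^ d = 1) : (toSemidirect w hw).ker ≤ f.ker := by
  obtain ⟨v, hv⟩ := ZMod.intCast_surjective (w : ZMod d)
  have hrel : SemiconjBy (f (.of 1)) (f (.of 0) ^ m) (f (.of 0) ^ n) := by
    simpa only [map_zpow] using (semiconjBy_of_one m n).map f
  obtain ⟨F, hFa, hFt⟩ := exists_semidirectProduct_zmod_hom hf hv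
    (semiconjBy_zpow_of_pow_eq_one hf hrel hm (hv ▸ hw))
  have hfF : f = F.comp (toSemidirect w hw) := by
    ext i
    fin_cases i
    · simp [hFa]
    · simp [hFt]
  rw [hfF, ← MonoidHom.comap_ker]
  exact MonoidHom.ker_le_comap _ _

end ZMod

lemma ker_toSemidirect_le_commutator_ker {k : ℕ} {w : (ZMod (n ^ k - m ^ k).natAbs)ˣ}
    (hw : w * (m : ZMod (n ^ k - m ^ k).natAbs) = n)
    (hm : IsUnit (m : ZMod (n ^ k - m ^ k).natAbs)) (φ : BS m n →* Multiplicative (ZMod k))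
    (hφa : φ (.of 0) = .ofAdd 0) (hφt : φ (.of 1) = .ofAdd 1) :
    (toSemidirect w hw).ker ≤ ⁅φ.ker, φ.ker⁆ := by
  have ha_mem : .of 0 ∈ φ.ker := hφa
  have ht_mem : .of 1 ^ k ∈ φ.ker := by
    rw [MonoidHom.mem_ker, map_pow, hφt, ← ofAdd_nsmul, nsmul_one, ZMod.natCast_self, ofAdd_zero]
  let π := QuotientGroup.mk' ⁅φ.ker, φ.ker⁆
  have hcomm : Commute (π (.of 1) ^ k) (π (.of 0)) := by
    rw [← map_pow, ← commutatorElement_eq_one_iff_commute, ← map_commutatorElement]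
    exact (QuotientGroup.eq_one_iff _).mpr (Subgroup.commutator_mem_commutator ht_mem ha_mem)
  have hrel : SemiconjBy (π (.of 1)) (π (.of 0) ^ m) (π (.of 0) ^ n) := by
    simpa only [map_zpow] using (semiconjBy_of_one m n).map π
  have hpow : π (.of 0) ^ (n ^ k - m ^ k).natAbs = 1 :=
    pow_natAbs_eq_one_of_semiconjBy_of_commute hrel hcomm
  exact (ker_toSemidirect_le w hw π hm hpow).trans_eq (QuotientGroup.ker_mk' _)

lemma map_ker_toSemidirect {k d : ℕ} {w : (ZMod d)ˣ} (hw : w * (m : ZMod d) = n)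
    (hwk : w ^ k = 1) (φ : BS m n →* Multiplicative (ZMod k))
    (hφa : φ (.of 0) = .ofAdd 0) (hφt : φ (.of 1) = .ofAdd 1) :
    φ.ker.map (toSemidirect w hw) = (prodToSemidirect hwk).range := by
  have hker : φ.ker = (prodToSemidirect hwk).range.comap (toSemidirect w hw) := by
    ext g
    rw [mem_ker_iff_dvd_right_toSemidirect w hw φ hφa hφt, Subgroup.mem_comap,
      mem_range_prodToSemidirect]
  rw [hker, Subgroup.map_comap_eq_self_of_surjective (toSemidirect_surjective w hw)]

end BS

theorem stmt_5_general {m n : ℤ} (hmn : IsCoprime m n) {k : ℕ} (hk : k ≠ 0)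
    (φ : BS m n →* Multiplicative (ZMod k))
    (hφa : φ (PresentedGroup.of 0) = Multiplicative.ofAdd 0)
    (hφt : φ (PresentedGroup.of 1) = Multiplicative.ofAdd 1) :
    φ.ker.index = k ∧
      Nonempty (Abelianization φ.ker ≃* Multiplicative (ℤ × ZMod (n ^ k - m ^ k).natAbs)) := by
  have hm := isUnit_intCast_zmod_pow_sub_pow hmn hk
  obtain ⟨w, hw, hwk⟩ := exists_unit_mul_eq_of_pow_eq_pow hm hk (intCast_pow_eq_intCast_pow m n k)
  have hle := BS.ker_toSemidirect_le_commutator_ker hw hm φ hφa hφt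
  have hmap := BS.map_ker_toSemidirect hw hwk φ hφa hφt
  exact ⟨index_ker_of_apply_eq_ofAdd_one φ hφt, ⟨abelianizationEquivOfKerLe _ _ hle
    ((MulEquiv.subgroupCongr hmap).trans
      (MonoidHom.ofInjective (prodToSemidirect_injective hwk hk)).symm)⟩⟩

theorem stmt_5 (p : ℤ)
    (φ : BS (2 * p + 1) (2 * p + 3) →* Multiplicative (ZMod 2))
    (hφa : φ (PresentedGroup.of 0) = Multiplicative.ofAdd 0)
    (hφt : φ (PresentedGroup.of 1) = Multiplicative.ofAdd 1) :
    (MonoidHom.ker φ).index = 2 ∧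
      Nonempty (Abelianization ↥(MonoidHom.ker φ) ≃*
        Multiplicative (ℤ × ZMod (8 * (p + 1)).natAbs)) := by
  have hcop : IsCoprime (2 * p + 1) (2 * p + 3) := ⟨p + 1, -p, by ring⟩
  have hdiff : 8 * (p + 1) = (2 * p + 3) ^ 2 - (2 * p + 1) ^ 2 := by ring
  rw [hdiff]
  exact stmt_5_general hcop two_ne_zero φ hφa hφt
end

section
/- Let p be an integer and k ≥ 1 an integer, and let Γ = G_{2p, 2p+2, k} = ⟨a, t ∣ t^k a^{2p} t^{−k} = a^{2p+2}⟩. Let θ : Γ → ℤ/2 be the group homomorphism determined by θ(a) = 1 and θ(t) = 0 (well defined since the relator has exponent sum −2 in a and 0 in t), and let Γ' = ker θ. Then Γ' has index 2 in Γ and the abelianization of Γ' is isomorphic to ℤ × ℤ, the free abelian group of rank 2. -/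
/-- The relator `t^k a^m t^{-k} a^{-n}` of the Baumslag–Strebel group, in the free
group on two generators, where `a` is `FreeGroup.of 0` and `t` is `FreeGroup.of 1`. -/
def BStRel (m n k : ℤ) : FreeGroup (Fin 2) :=
  FreeGroup.of 1 ^ k * FreeGroup.of 0 ^ m * FreeGroup.of 1 ^ (-k) * FreeGroup.of 0 ^ (-n)

/-- The Baumslag–Strebel group `G_{m,n,k} = ⟨a, t ∣ t^k a^m t^{-k} = a^n⟩`. -/
abbrev BSt (m n k : ℤ) : Type :=
  PresentedGroup ({BStRel m n k} : Set (FreeGroup (Fin 2)))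

/-!
Let `N ∣ m` and `n = m + N`; the theorem is the case `N = 2`. Map `Γ = G_{m,n,k}` to the wreath
product `ℤ ≀ ℤ/N` by sending `a` to the generator of `ℤ/N` and `t` to a generator of one of the
copies of `ℤ`; this is possible because `a ^ m` and `a ^ n` become trivial. On `ker θ` the map lands
in the base group `ℤ^N` and sends the conjugates `a^i t a^(-i)`, `0 ≤ i < N`, to its basis.
Conversely, `ker θ` is generated by `a ^ N` and the conjugates of `t`. In its abelianization a
conjugate `g t g⁻¹` only depends on `θ g`, and conjugation by `t ^ k` is trivial, so the relator
says that `a ^ N` dies. Hence the classes of the `a^i t a^(-i)` form a basis.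
-/

section Kernel

variable {G Q : Type*} [Group G] [Group Q] {θ : G →* Q}

lemma map_conjNormal_eq_of_map_eq {A : Type*} [CommGroup A] (f : θ.ker →* A) (x : θ.ker) {g h : G}
    (hgh : θ g = θ h) : f (MulAut.conjNormal g x) = f (MulAut.conjNormal h x) := by
  let c : θ.ker := ⟨g * h⁻¹, by rw [MonoidHom.mem_ker, map_mul, map_inv, hgh, mul_inv_cancel]⟩
  have hc : MulAut.conjNormal g x = c * MulAut.conjNormal h x * c⁻¹ := by
    ext
    simp only [c, MulAut.conjNormal_apply, Subgroup.coe_mul, Subgroup.coe_inv]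
    group
  rw [hc, map_mul, map_mul, map_inv, mul_inv_cancel_comm]

lemma ker_eq_zpowers_sup_normalClosure {a t : G} (hgen : Subgroup.closure {a, t} = ⊤)
    (ht : θ t = 1) :
    θ.ker = Subgroup.zpowers (a ^ orderOf (θ a)) ⊔ Subgroup.normalClosure {t} := by
  have htker : Subgroup.normalClosure {t} ≤ θ.ker :=
    Subgroup.normalClosure_le_normal (Set.singleton_subset_iff.mpr ht)
  refine le_antisymm (fun x hx => ?_) (sup_le ?_ htker)
  · have htop : Subgroup.zpowers a ⊔ Subgroup.normalClosure {t} = ⊤ := by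
      rw [eq_top_iff, ← hgen, Subgroup.closure_le, Set.pair_subset_iff]
      exact ⟨Subgroup.mem_sup_left (Subgroup.mem_zpowers a),
        Subgroup.mem_sup_right (Subgroup.subset_normalClosure rfl)⟩
    obtain ⟨_, ⟨j, rfl⟩, y, hy, rfl⟩ :=
      Subgroup.mem_sup_of_normal_right.mp (htop ▸ Subgroup.mem_top x)
    have hj : θ a ^ j = 1 := by
      rwa [MonoidHom.mem_ker, map_mul, map_zpow, htker hy, mul_one] at hx
    obtain ⟨i, rfl⟩ := orderOf_dvd_iff_zpow_eq_one.mpr hj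
    exact mul_mem (Subgroup.mem_sup_left ⟨i, by simp [zpow_mul]⟩) (Subgroup.mem_sup_right hy)
  · rw [Subgroup.zpowers_le, MonoidHom.mem_ker, map_pow, pow_orderOf_eq_one]

/-- The least positive power of `a` that lies in the kernel of `θ`, as an element of the kernel
(it is `1` if there is no such power). -/
noncomputable def kerPow (θ : G →* Q) (a : G) : θ.ker :=
  ⟨a ^ orderOf (θ a), by rw [MonoidHom.mem_ker, map_pow, pow_orderOf_eq_one]⟩

lemma closure_insert_kerPow_range_conjNormal {a : G} {t : θ.ker}
    (hgen : Subgroup.closure {a, (t : G)} = ⊤) :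
    Subgroup.closure (insert (kerPow θ a) (Set.range fun g : G => MulAut.conjNormal g t)) = ⊤ := by
  have hconj : Group.conjugatesOfSet {(t : G)} =
      θ.ker.subtype '' Set.range fun g : G => MulAut.conjNormal g t := by
    ext x
    simp [Group.mem_conjugatesOfSet_iff, isConj_iff]
  apply Subgroup.map_injective θ.ker.subtype_injective
  rw [← MonoidHom.range_eq_map, Subgroup.range_subtype, MonoidHom.map_closure, Set.image_insert_eq,
    Set.insert_eq, Subgroup.closure_union, ← Subgroup.zpowers_eq_closure, ← hconj]
  exact (ker_eq_zpowers_sup_normalClosure hgen t.2).symm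

/-- The homomorphism `f` makes the classes of the conjugates of `t` independent, and `ha` makes them
generate. -/
theorem nonempty_abelianization_ker_mulEquiv_pi [Finite Q] [DecidableEq Q] {a : G} {t : θ.ker}
    (hgen : Subgroup.closure {a, (t : G)} = ⊤) (hθ : Function.Surjective θ)
    (ha : Abelianization.of (kerPow θ a) = 1) (f : θ.ker →* (Q → Multiplicative ℤ))
    (hf : ∀ g, f (MulAut.conjNormal g t) = Pi.mulSingle (θ g) (Multiplicative.ofAdd 1)) :
    Nonempty (Abelianization θ.ker ≃* (Q → Multiplicative ℤ)) := by
  have := Fintype.ofFinite Q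
  let s (q : Q) : Abelianization θ.ker :=
    Abelianization.of (MulAut.conjNormal (Function.surjInv hθ q) t)
  have hs (g : G) : Abelianization.of (MulAut.conjNormal g t) = s (θ g) :=
    map_conjNormal_eq_of_map_eq _ t (Function.surjInv_eq hθ _).symm
  let e : (Q → Multiplicative ℤ) →* Abelianization θ.ker :=
    MonoidHom.noncommPiCoprod (fun q => zpowersHom _ (s q)) fun _ _ _ _ _ => Commute.all _ _
  have he (q : Q) : e (Pi.mulSingle q (Multiplicative.ofAdd 1)) = s q :=
    (MonoidHom.noncommPiCoprod_mulSingle _ _ _).trans (by simp)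
  refine ⟨MonoidHom.toMulEquiv (Abelianization.lift f) e ?_ ?_⟩
  · refine Abelianization.hom_ext _ _
      (MonoidHom.eq_of_eqOn_dense (closure_insert_kerPow_range_conjNormal hgen) ?_)
    rintro _ (rfl | ⟨g, rfl⟩)
    · simp [ha]
    · simp [← hs, hf, he]
  · refine MonoidHom.functions_ext' _ _ _ fun q => MonoidHom.ext_mint ?_
    simp [he, s, hf, Function.surjInv_eq]

end Kernel

section Wreath

variable {G Q D : Type*} [Group G] [Group Q]

/-- The base-group component of a homomorphism to a wreath product, restricted to the elements that
it maps into the base group. -/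
def wreathLeft [Group D] {θ : G →* Q} (ρ : G →* D ≀ᵣ Q)
    (hρ : RegularWreathProduct.rightHom.comp ρ = θ) : θ.ker →* (Q → D) where
  toFun x := (ρ x).left
  map_one' := by simp
  map_mul' x y := by
    have hx : (ρ x).right = 1 := (DFunLike.congr_fun hρ x.1).trans x.2
    ext q
    simp [hx]

lemma left_conj_mulSingle [CommGroup D] [DecidableEq Q] (w : D ≀ᵣ Q) (d : D) :
    (w * ⟨Pi.mulSingle 1 d, 1⟩ * w⁻¹).left = Pi.mulSingle w.right d := by
  ext q
  simp [Pi.mulSingle_apply, inv_mul_eq_one, eq_comm]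

end Wreath

namespace BSt

open PresentedGroup (of)

variable {m n k : ℤ}

lemma closure_of_zero_of_one : Subgroup.closure {of 0, (of 1 : BSt m n k)} = ⊤ := by
  have hrange : {of 0, (of 1 : BSt m n k)} = Set.range (of : Fin 2 → BSt m n k) := by
    ext x
    simp [Fin.exists_fin_two, eq_comm]
  rw [hrange, PresentedGroup.closure_range_of]

lemma of_one_zpow_mul_of_zero_zpow_mul_inv :
    (of 1 : BSt m n k) ^ k * of 0 ^ m * (of 1 ^ k)⁻¹ = of 0 ^ n := by
  have hrel : PresentedGroup.mk ({BStRel m n k} : Set (FreeGroup (Fin 2))) (BStRel m n k) = 1 :=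
    PresentedGroup.one_of_mem rfl
  rw [← mul_inv_eq_one, ← zpow_neg, ← zpow_neg, ← hrel]
  rfl

section ToWreath

variable {Q : Type*} [Group Q] [DecidableEq Q]

/-- The homomorphism from `G_{m,n,k}` to the wreath product `ℤ ≀ Q` that sends `a` to `q` and `t` to
the generator of the copy of `ℤ` indexed by `1`. -/
def toWreath (q : Q) (hm : q ^ m = 1) (hn : q ^ n = 1) : BSt m n k →* Multiplicative ℤ ≀ᵣ Q :=
  PresentedGroup.toGroup
    (f := ![RegularWreathProduct.inl q, ⟨Pi.mulSingle 1 (Multiplicative.ofAdd 1), 1⟩]) <| by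
      rintro _ rfl
      simp only [BStRel, map_mul, map_zpow, FreeGroup.lift_apply_of, Matrix.cons_val_zero,
        Matrix.cons_val_one]
      simp only [← map_zpow, hm, zpow_neg, hn, map_one, mul_one, mul_inv_cancel]

variable (q : Q) (hm : q ^ m = 1) (hn : q ^ n = 1)

lemma toWreath_of_zero :
    toWreath (k := k) q hm hn (of 0) = RegularWreathProduct.inl q :=
  PresentedGroup.toGroup.of _

lemma toWreath_of_one :
    toWreath (k := k) q hm hn (of 1) = ⟨Pi.mulSingle 1 (Multiplicative.ofAdd 1), 1⟩ :=
  PresentedGroup.toGroup.of _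

end ToWreath

variable {Q : Type*} [Group Q] {θ : BSt m n k →* Q}

lemma rightHom_comp_toWreath [DecidableEq Q] (hθt : θ (of 1) = 1) (hm : θ (of 0) ^ m = 1)
    (hn : θ (of 0) ^ n = 1) :
    RegularWreathProduct.rightHom.comp (toWreath (θ (of 0)) hm hn) = θ := by
  refine PresentedGroup.ext (Fin.forall_fin_two.mpr ⟨?_, ?_⟩)
  · simp [toWreath_of_zero]
  · simp [toWreath_of_one, hθt]

lemma abelianization_of_kerPow_eq_one (hθt : θ (of 1) = 1) (hm : θ (of 0) ^ m = 1)
    (hn : n = m + orderOf (θ (of 0))) :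
    Abelianization.of (kerPow θ (of 0)) = 1 := by
  let x : θ.ker := ⟨of 0 ^ m, by rw [MonoidHom.mem_ker, map_zpow, hm]⟩
  have hconj : MulAut.conjNormal (of 1 ^ k) x = x * kerPow θ (of 0) := by
    ext
    calc (MulAut.conjNormal (of 1 ^ k) x : BSt m n k)
        = of 0 ^ n := by
          rw [MulAut.conjNormal_apply, of_one_zpow_mul_of_zero_zpow_mul_inv]
      _ = of 0 ^ (m + orderOf (θ (of 0)) : ℤ) := congrArg (of 0 ^ ·) hn
      _ = of 0 ^ m * of 0 ^ orderOf (θ (of 0)) := by rw [zpow_add, zpow_natCast]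
  have hab : Abelianization.of (MulAut.conjNormal (of 1 ^ k) x) =
      Abelianization.of (MulAut.conjNormal 1 x) :=
    map_conjNormal_eq_of_map_eq _ x (by rw [map_zpow, hθt, one_zpow, map_one])
  rwa [hconj, map_mul, map_one, MulAut.one_apply, mul_eq_left] at hab

theorem nonempty_abelianization_ker_mulEquiv [Finite Q] (hθ : Function.Surjective θ)
    (hθt : θ (of 1) = 1) (hm : θ (of 0) ^ m = 1) (hn : n = m + orderOf (θ (of 0))) :
    Nonempty (Abelianization θ.ker ≃* (Q → Multiplicative ℤ)) := by
  classical
  have hn' : θ (of 0) ^ n = 1 := by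
    rw [congrArg (θ (of 0) ^ ·) hn, zpow_add, hm, zpow_natCast, pow_orderOf_eq_one, one_mul]
  have hρ := rightHom_comp_toWreath hθt hm hn'
  refine nonempty_abelianization_ker_mulEquiv_pi (t := ⟨of 1, hθt⟩)
    closure_of_zero_of_one hθ (abelianization_of_kerPow_eq_one hθt hm hn) (wreathLeft _ hρ)
    fun g => ?_
  have hg : (toWreath (θ (of 0)) hm hn' g).right = θ g := DFunLike.congr_fun hρ g
  rw [← hg, ← left_conj_mulSingle, ← toWreath_of_one (k := k) _ hm hn', ← map_inv, ← map_mul,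
    ← map_mul]
  rfl

end BSt

theorem stmt_9_general {N : ℕ} [NeZero N] {m n k : ℤ} (hm : (N : ℤ) ∣ m) (hn : n = m + N)
    (θ : BSt m n k →* Multiplicative (ZMod N))
    (hθa : θ (PresentedGroup.of 0) = Multiplicative.ofAdd 1)
    (hθt : θ (PresentedGroup.of 1) = Multiplicative.ofAdd 0) :
    θ.ker.index = N ∧ Nonempty (Abelianization θ.ker ≃* Multiplicative (ZMod N → ℤ)) := by
  have horder : orderOf (θ (PresentedGroup.of 0)) = N := by
    rw [hθa, orderOf_ofAdd_eq_addOrderOf, ZMod.addOrderOf_one]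
  have hsurj : Function.Surjective θ := fun z =>
    ⟨PresentedGroup.of 0 ^ (z.toAdd.val), by simp [hθa, ← ofAdd_nsmul]⟩
  have hpow : θ (PresentedGroup.of 0) ^ m = 1 := by
    rwa [← orderOf_dvd_iff_zpow_eq_one, horder]
  obtain ⟨e⟩ := BSt.nonempty_abelianization_ker_mulEquiv hsurj hθt hpow (by rwa [horder])
  refine ⟨?_, ⟨e.trans (MulEquiv.piMultiplicative fun _ : ZMod N => ℤ).symm⟩⟩
  rw [Subgroup.index_ker, MonoidHom.range_eq_top.mpr hsurj, Subgroup.card_top]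
  simp

theorem stmt_9 (p k : ℤ) (hk : 1 ≤ k)
    (θ : BSt (2 * p) (2 * p + 2) k →* Multiplicative (ZMod 2))
    (hθa : θ (PresentedGroup.of 0) = Multiplicative.ofAdd 1)
    (hθt : θ (PresentedGroup.of 1) = Multiplicative.ofAdd 0) :
    (MonoidHom.ker θ).index = 2 ∧
      Nonempty (Abelianization ↥(MonoidHom.ker θ) ≃* Multiplicative (ℤ × ℤ)) :=
  (stmt_9_general (Dvd.intro p rfl) rfl θ hθa hθt).imp_right <| Nonempty.map
    (·.trans (LinearEquiv.finTwoArrow ℤ ℤ).toAddEquiv.toMultiplicative)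
end

section
/- Let p ≥ 1 and l ≥ 1 be integers, set k = 2l−1, and let Γ = G_{2p−1, 2p+1, k} = ⟨a, t ∣ t^k a^{2p−1} t^{−k} = a^{2p+1}⟩. Let θ : Γ → ℤ/2 be the group homomorphism determined by θ(a) = 0 and θ(t) = 1 (well defined since the relator has exponent sum −2 in a and 0 in t), and let Γ' = ker θ. Then Γ' has index 2 in Γ and the abelianization of Γ' is isomorphic to ℤ × ℤ/(8p). -/
/-!
Let `θ : G_{m,n,k} → ℤ/d` send `a` to `0` and `t` to `1`, with `m`, `n` coprime and `k` prime to
`d`, and put `K = ker θ`. In `G_{m,n,k} / [K, K]` the element `t ^ d` commutes with `a`, so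
iterating the relation `d` times gives
`a ^ (m ^ d) = t ^ (k d) a ^ (m ^ d) t ^ (-k d) = a ^ (n ^ d)`. Hence `a` has
order dividing `N = |m ^ d - n ^ d|`, conjugation by `t ^ k` is multiplication by `n / m` on
the cyclic group generated by `a`, and conjugation by `t` is multiplication by a
unit `w` of `ℤ/N` with `w ^ d = 1` and `w ^ k = n / m`. So `G_{m,n,k} / [K, K]` is the semidirect
product of `ℤ/N` by `ℤ`, in which `K / [K, K]` is the subgroup `ℤ/N × dℤ`, a direct product
because `w ^ d = 1`.
-/

section GroupTheory

variable {G H N : Type*} [Group G] [Group H] [Group N]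

/-- A surjection onto a commutative group whose kernel lies in the commutator subgroup is the
abelianization. -/
noncomputable def abelianizationEquivOfSurjective {A : Type*} [CommGroup A] (f : G →* A)
    (hf : Function.Surjective f) (hker : f.ker ≤ commutator G) : Abelianization G ≃* A :=
  (QuotientGroup.quotientMulEquivOfEq
    (le_antisymm (Abelianization.commutator_subset_ker f) hker)).trans
    (QuotientGroup.quotientKerEquivOfSurjective f hf)

lemma nonempty_abelianization_mulEquiv_of_eq_comap_range {A : Type*} [CommGroup A] {f : G →* H}
    (hf : Function.Surjective f) {ψ : A →* H} (hψ : Function.Injective ψ) {K : Subgroup G}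
    (hK : K = ψ.range.comap f) (hker : f.ker ≤ ⁅K, K⁆) : Nonempty (Abelianization K ≃* A) := by
  subst hK
  let g := f.subgroupComap ψ.range
  have hg : g.ker ≤ commutator (ψ.range.comap f) := by
    intro x hx
    have hfx : (x : G) ∈ f.ker := congrArg Subtype.val hx
    have hmem := hker hfx
    rw [← Subgroup.map_subtype_commutator] at hmem
    exact (Subgroup.mem_map_iff_mem Subtype.val_injective).mp hmem
  let e : ψ.range ≃* A := (MonoidHom.ofInjective hψ).symm
  refine ⟨abelianizationEquivOfSurjective ((e : ψ.range →* A).comp g) ?_ ?_⟩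
  · exact e.surjective.comp (f.subgroupComap_surjective_of_surjective _ hf)
  · rwa [MonoidHom.ker_mulEquiv_comp]

lemma commute_mk_of_mem {K : Subgroup G} [K.Normal] {x y : G} (hx : x ∈ K) (hy : y ∈ K) :
    Commute (x : G ⧸ ⁅K, K⁆) (y : G ⧸ ⁅K, K⁆) := by
  rw [commute_iff_eq, ← QuotientGroup.mk_mul, ← QuotientGroup.mk_mul, QuotientGroup.eq]
  have := Subgroup.commutator_mem_commutator (inv_mem hy) (inv_mem hx)
  simpa [commutatorElement_def, mul_assoc] using this

/-- The pairs of automorphisms of `N` and `G` which the homomorphism `f : N → G` intertwines. -/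
def intertwiners (f : N →* G) : Subgroup (MulAut N × MulAut G) where
  carrier := {p | ∀ x, f (p.1 x) = p.2 (f x)}
  one_mem' _ := rfl
  mul_mem' {p q} hp hq x := (hp (q.1 x)).trans (congrArg p.2 (hq x))
  inv_mem' {p} hp x := by
    apply p.2.injective
    exact (hp (p.1⁻¹ x)).symm.trans <| by simp

lemma mem_of_zpow_mem_of_zpow_mem {K : Subgroup G} {g : G} {i j : ℤ} (hij : IsCoprime i j)
    (hi : g ^ i ∈ K) (hj : g ^ j ∈ K) : g ∈ K := by
  obtain ⟨x, y, hxy⟩ := hij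
  have hg : g = (g ^ i) ^ x * (g ^ j) ^ y := by
    rw [← zpow_mul, ← zpow_mul, ← zpow_add, mul_comm i, mul_comm j, hxy, zpow_one]
  rw [hg]
  exact mul_mem (zpow_mem hi x) (zpow_mem hj y)

lemma exists_pow_eq_one_and_zpow_eq {u : G} {k : ℤ} {d : ℕ} (hkd : IsCoprime k d)
    (hu : u ^ d = 1) : ∃ w : G, w ^ d = 1 ∧ w ^ k = u := by
  obtain ⟨x, y, hxy⟩ := hkd
  refine ⟨u ^ x, ?_, ?_⟩
  · rw [← zpow_natCast, zpow_comm, zpow_natCast, hu, one_zpow]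
  · calc (u ^ x) ^ k = u ^ (x * k + y * d) * ((u ^ d) ^ y)⁻¹ := by
          rw [zpow_add, mul_comm y, zpow_mul u d, zpow_natCast, mul_inv_cancel_right, zpow_mul]
      _ = u := by rw [hxy, hu, one_zpow, inv_one, mul_one, zpow_one]

lemma mulAut_pow_apply_zpow_pow {σ : MulAut G} {a : G} {m n : ℤ} (h : σ (a ^ m) = a ^ n) (i : ℕ) :
    (σ ^ i) (a ^ m ^ i) = a ^ n ^ i := by
  induction i with
  | zero => simp
  | succ i ih =>
    calc (σ ^ (i + 1)) (a ^ m ^ (i + 1)) = σ ((σ ^ i) (a ^ m ^ i) ^ m) := by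
          rw [← map_zpow, ← zpow_mul, ← pow_succ, pow_succ' σ, MulAut.mul_apply]
      _ = σ (a ^ m) ^ n ^ i := by
          rw [ih, ← zpow_mul, mul_comm, zpow_mul, map_zpow]
      _ = a ^ n ^ (i + 1) := by rw [h, ← zpow_mul, ← pow_succ']

lemma zpow_pow_sub_pow_eq_one {τ : MulAut G} {a : G} {m n k : ℤ} {d : ℕ}
    (hτd : (τ ^ d) a = a) (hτk : (τ ^ k) (a ^ m) = a ^ n) : a ^ (m ^ d - n ^ d) = 1 := by
  have hτkd : ((τ ^ k) ^ d) a = a := by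
    have hmem : τ ^ d ∈ MulAction.stabilizer (MulAut G) a := hτd
    rw [← zpow_natCast, zpow_comm, zpow_natCast]
    exact zpow_mem hmem k
  rw [zpow_sub, ← mulAut_pow_apply_zpow_pow hτk, map_zpow, hτkd, mul_inv_cancel]

end GroupTheory

section ZMod

variable {G : Type*} [Group G] {N : ℕ}

/-- The automorphism `x ↦ w x` of the cyclic group `ℤ/N`, written multiplicatively. -/
def zmodUnitAut (N : ℕ) : (ZMod N)ˣ →* MulAut (Multiplicative (ZMod N)) :=
  (MulAutMultiplicative (ZMod N)).symm.toMonoidHom.comp AddAut.mulLeft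

lemma zmodUnitAut_apply_ofAdd (w : (ZMod N)ˣ) (x : ZMod N) :
    zmodUnitAut N w (.ofAdd x) = .ofAdd (w * x) :=
  rfl

lemma exists_zmod_hom_of_pow_eq_one {a : G} (ha : a ^ N = 1) :
    ∃ f : Multiplicative (ZMod N) →* G, f (.ofAdd 1) = a := by
  let g : {g : ℤ →+ Additive G // g N = 0} :=
    ⟨zmultiplesHom (Additive G) (.ofMul a), by simp [← ofMul_pow, ha]⟩
  have hg : ZMod.lift N g 1 = .ofMul a := by
    rw [← Int.cast_one, ZMod.lift_coe, zmultiplesHom_apply, one_zsmul]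
  exact ⟨AddMonoidHom.toMultiplicativeLeft (ZMod.lift N g), congrArg Additive.toMul hg⟩

lemma zmod_hom_ofAdd_intCast (f : Multiplicative (ZMod N) →* G) (i : ℤ) :
    f (.ofAdd (i : ZMod N)) = f (.ofAdd 1) ^ i := by
  rw [← map_zpow, ← ofAdd_zsmul, zsmul_one]

lemma zmodUnitAut_mem_intertwiners {f : Multiplicative (ZMod N) →* G} {u : (ZMod N)ˣ}
    {σ : MulAut G} {m n : ℤ} (hm : IsUnit (m : ZMod N)) (hu : u * (m : ZMod N) = n)
    (h : σ (f (.ofAdd 1) ^ m) = f (.ofAdd 1) ^ n) : (zmodUnitAut N u, σ) ∈ intertwiners f := by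
  intro x
  obtain ⟨c, hc⟩ := hm.dvd (a := x.toAdd)
  obtain ⟨i, rfl⟩ := ZMod.intCast_surjective c
  obtain rfl : x = .ofAdd (m * i : ZMod N) := hc
  calc f (zmodUnitAut N u (.ofAdd (m * i : ZMod N))) = f (.ofAdd ((n * i : ℤ) : ZMod N)) := by
        rw [zmodUnitAut_apply_ofAdd, ← mul_assoc, hu, Int.cast_mul]
    _ = σ (f (.ofAdd 1) ^ m) ^ i := by rw [zmod_hom_ofAdd_intCast, zpow_mul, h]
    _ = σ (f (.ofAdd (m * i : ZMod N))) := by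
        rw [← map_zpow, ← zpow_mul, ← zmod_hom_ofAdd_intCast, Int.cast_mul]

lemma isCoprime_pow_sub_pow {R : Type*} [CommRing R] {x y : R} (h : IsCoprime x y) {d : ℕ}
    (hd : d ≠ 0) : IsCoprime x (x ^ d - y ^ d) := by
  obtain ⟨c, hc⟩ := dvd_pow_self x hd
  rw [hc, sub_eq_neg_add]
  exact h.pow_right.neg_right.add_mul_left_right c

lemma isUnit_intCast_zmod_of_dvd_pow_sub_pow {m n : ℤ} {d : ℕ} (hd : d ≠ 0)
    (hmn : IsCoprime m n) (hN : (N : ℤ) ∣ m ^ d - n ^ d) : IsUnit (m : ZMod N) := by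
  rw [ZMod.coe_int_isUnit_iff_isCoprime, isCoprime_comm]
  exact (isCoprime_pow_sub_pow hmn hd).of_isCoprime_of_dvd_right hN

/-- Modulo `N` the unit `n / m` has `d`-th power `1`, hence a `k`-th root among its own powers. -/
lemma exists_unit_pow_eq_one_and_zpow_mul_eq {m n k : ℤ} {d : ℕ} (hd : d ≠ 0)
    (hmn : IsCoprime m n) (hkd : IsCoprime k d) (hN : (N : ℤ) ∣ m ^ d - n ^ d) :
    ∃ w : (ZMod N)ˣ, w ^ d = 1 ∧ ↑(w ^ k) * (m : ZMod N) = n := by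
  obtain ⟨u, hu⟩ := isUnit_intCast_zmod_of_dvd_pow_sub_pow hd hmn hN
  obtain ⟨v, hv⟩ := isUnit_intCast_zmod_of_dvd_pow_sub_pow hd hmn.symm (dvd_sub_comm.mp hN)
  have hvu : (v / u) ^ d = 1 := by
    rw [div_pow, div_eq_one, Units.ext_iff, Units.val_pow_eq_pow_val, Units.val_pow_eq_pow_val, hu,
      hv, eq_comm, ← sub_eq_zero]
    exact_mod_cast (ZMod.intCast_zmod_eq_zero_iff_dvd _ N).mpr hN
  obtain ⟨w, hwd, hwk⟩ := exists_pow_eq_one_and_zpow_eq hkd hvu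
  refine ⟨w, hwd, ?_⟩
  rw [hwk, ← hu, ← hv, ← Units.val_mul, div_mul_cancel]

lemma exists_zmod_hom_mem_intertwiners {a : G} {τ : MulAut G} {w : (ZMod N)ˣ} {m n k : ℤ} {d : ℕ}
    (ha : a ^ N = 1) (hm : IsUnit (m : ZMod N)) (hwd : w ^ d = 1)
    (hw : ↑(w ^ k) * (m : ZMod N) = n) (hkd : IsCoprime k d) (hτd : (τ ^ d) a = a)
    (hτk : (τ ^ k) (a ^ m) = a ^ n) : ∃ f : Multiplicative (ZMod N) →* G,
      f (.ofAdd 1) = a ∧ (zmodUnitAut N w, τ) ∈ intertwiners f := by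
  obtain ⟨f, rfl⟩ := exists_zmod_hom_of_pow_eq_one ha
  refine ⟨f, rfl, mem_of_zpow_mem_of_zpow_mem hkd ?_ ?_⟩
  · rw [Prod.pow_mk, ← map_zpow]
    exact zmodUnitAut_mem_intertwiners hm hw hτk
  · rw [zpow_natCast, Prod.pow_mk, ← map_pow, hwd]
    exact zmodUnitAut_mem_intertwiners (m := 1) (n := 1) (by simp) (by simp) (by simpa using hτd)

end ZMod

/-- The semidirect product `N ⋊ ℤ` in which the generator of `ℤ` acts on `N` by `α`. -/
abbrev AutSemidirect {N : Type*} [Group N] (α : MulAut N) : Type _ :=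
  N ⋊[zpowersHom (MulAut N) α] Multiplicative ℤ

namespace AutSemidirect

variable {G N : Type*} [Group G] [Group N] {α : MulAut N} {d : ℕ}

/-- The generator of the factor `ℤ` of `N ⋊ ℤ`. -/
def stable (α : MulAut N) : AutSemidirect α :=
  SemidirectProduct.inr (.ofAdd 1)

lemma stable_zpow (i : ℤ) : stable α ^ i = SemidirectProduct.inr (.ofAdd i) := by
  rw [stable, ← map_zpow, ← ofAdd_zsmul, smul_eq_mul, mul_one]

lemma stable_zpow_conj_inl (i : ℤ) (x : N) :
    stable α ^ i * SemidirectProduct.inl x * stable α ^ (-i) =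
      SemidirectProduct.inl ((α ^ i) x) := by
  rw [stable_zpow, stable_zpow, ofAdd_neg]
  exact (SemidirectProduct.inl_aut _ x).symm

/-- The homomorphism `N ⋊ ℤ → G` restricting to `f` on `N` and sending the generator of `ℤ`
to `t`. -/
def lift (f : N →* G) (t : G) (h : (α, MulAut.conj t) ∈ intertwiners f) : AutSemidirect α →* G :=
  SemidirectProduct.lift f (zpowersHom G t) fun i => by
    ext x
    rw [zpowersHom_apply, zpowersHom_apply, map_zpow]
    exact zpow_mem h i.toAdd x

lemma lift_inl (f : N →* G) (t : G) (h : (α, MulAut.conj t) ∈ intertwiners f) (x : N) :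
    lift f t h (SemidirectProduct.inl x) = f x :=
  SemidirectProduct.lift_inl _ _ _ x

lemma lift_stable (f : N →* G) (t : G) (h : (α, MulAut.conj t) ∈ intertwiners f) :
    lift f t h (stable α) = t := by
  simp [lift, stable]

/-- The projection `N ⋊ ℤ → ℤ/d`. -/
def degreeMod (α : MulAut N) (d : ℕ) : AutSemidirect α →* Multiplicative (ZMod d) :=
  (Int.castAddHom (ZMod d)).toMultiplicative.comp SemidirectProduct.rightHom

lemma mem_ker_degreeMod {x : AutSemidirect α} :
    x ∈ (degreeMod α d).ker ↔ (d : ℤ) ∣ x.right.toAdd :=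
  ZMod.intCast_zmod_eq_zero_iff_dvd _ d

/-- The homomorphism `(i, x) ↦ x t ^ (d i)` from `ℤ × N` to `N ⋊ ℤ`, where the generator `t` of
`ℤ` acts with `α ^ d = 1`. -/
def prodHom (hα : α ^ d = 1) : Multiplicative ℤ × N →* AutSemidirect α where
  toFun p := ⟨p.2, p.1 ^ d⟩
  map_one' := SemidirectProduct.ext rfl (one_pow d)
  map_mul' p q := by
    have h : zpowersHom (MulAut N) α (p.1 ^ d) = 1 := by
      rw [zpowersHom_apply, toAdd_pow, nsmul_eq_mul, zpow_mul, zpow_natCast, hα, one_zpow]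
    refine SemidirectProduct.ext ?_ (mul_pow p.1 q.1 d)
    rw [SemidirectProduct.mul_left, h]
    rfl

lemma prodHom_injective (hd : d ≠ 0) (hα : α ^ d = 1) : Function.Injective (prodHom hα) := by
  rintro ⟨i, x⟩ ⟨j, y⟩ h
  obtain ⟨hxy, hij⟩ := SemidirectProduct.ext_iff.mp h
  exact Prod.ext (pow_left_injective hd hij) hxy

lemma range_prodHom (hα : α ^ d = 1) : (prodHom hα).range = (degreeMod α d).ker := by
  ext x
  rw [mem_ker_degreeMod]
  constructor
  · rintro ⟨⟨i, y⟩, rfl⟩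
    exact ⟨i.toAdd, nsmul_eq_mul d i.toAdd⟩
  · rintro ⟨i, hi⟩
    exact ⟨(.ofAdd i, x.left), SemidirectProduct.ext rfl ((nsmul_eq_mul d i).trans hi.symm)⟩

end AutSemidirect

namespace BSt

open AutSemidirect

variable {G : Type*} [Group G] {m n k : ℤ} {d N : ℕ} {w : (ZMod N)ˣ}

lemma hom_ext {f g : BSt m n k →* G} (ha : f (PresentedGroup.of 0) = g (PresentedGroup.of 0))
    (ht : f (PresentedGroup.of 1) = g (PresentedGroup.of 1)) : f = g :=
  PresentedGroup.ext (Fin.forall_fin_two.mpr ⟨ha, ht⟩)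

lemma relation (m n k : ℤ) :
    (PresentedGroup.of 1 ^ k * PresentedGroup.of 0 ^ m * PresentedGroup.of 1 ^ (-k) : BSt m n k) =
      PresentedGroup.of 0 ^ n := by
  rw [← mul_inv_eq_one, ← zpow_neg]
  exact PresentedGroup.one_of_mem (Set.mem_singleton (BStRel m n k))

/-- The homomorphism `G_{m,n,k} → ℤ/N ⋊ ℤ` sending `a` to the generator of `ℤ/N` and `t` to that
of `ℤ`. -/
def toAutSemidirect (hw : ↑(w ^ k) * (m : ZMod N) = n) :
    BSt m n k →* AutSemidirect (zmodUnitAut N w) :=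
  PresentedGroup.toGroup (f := ![SemidirectProduct.inl (.ofAdd 1), stable _]) <| by
    rintro r rfl
    simp only [BStRel, map_mul, map_zpow, FreeGroup.lift_apply_of, Matrix.cons_val_zero,
      Matrix.cons_val_one]
    rw [← map_zpow SemidirectProduct.inl, ← map_zpow SemidirectProduct.inl, stable_zpow_conj_inl,
      ← ofAdd_zsmul, ← ofAdd_zsmul, ← map_zpow, zmodUnitAut_apply_ofAdd, zsmul_one, hw, ← map_mul,
      ← ofAdd_add, zsmul_one, Int.cast_neg, add_neg_cancel, ofAdd_zero, map_one]

lemma toAutSemidirect_of_zero (hw : ↑(w ^ k) * (m : ZMod N) = n) :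
    toAutSemidirect hw (PresentedGroup.of 0) = SemidirectProduct.inl (.ofAdd 1) :=
  PresentedGroup.toGroup.of _

lemma toAutSemidirect_of_one (hw : ↑(w ^ k) * (m : ZMod N) = n) :
    toAutSemidirect hw (PresentedGroup.of 1) = stable _ :=
  PresentedGroup.toGroup.of _

lemma toAutSemidirect_surjective (hw : ↑(w ^ k) * (m : ZMod N) = n) :
    Function.Surjective (toAutSemidirect hw) := by
  intro x
  obtain ⟨i, hi⟩ := ZMod.intCast_surjective x.left.toAdd
  refine ⟨PresentedGroup.of 0 ^ i * PresentedGroup.of 1 ^ x.right.toAdd, ?_⟩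
  rw [map_mul, map_zpow, map_zpow, toAutSemidirect_of_zero, toAutSemidirect_of_one, stable_zpow,
    ← map_zpow, ← ofAdd_zsmul, zsmul_one, hi]
  exact SemidirectProduct.inl_left_mul_inr_right x

section Kernel

variable {θ : BSt m n k →* Multiplicative (ZMod d)}

lemma index_ker (hθt : θ (PresentedGroup.of 1) = .ofAdd 1) : θ.ker.index = d := by
  have hsurj : Function.Surjective θ := fun x => by
    obtain ⟨i, hi⟩ := ZMod.intCast_surjective x.toAdd
    refine ⟨PresentedGroup.of 1 ^ i, ?_⟩
    rw [map_zpow, hθt, ← ofAdd_zsmul, zsmul_one, hi, ofAdd_toAdd]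
  rw [Subgroup.index_ker, MonoidHom.range_eq_top.mpr hsurj, Subgroup.card_top]
  exact Nat.card_zmod d

lemma degreeMod_comp_toAutSemidirect (hw : ↑(w ^ k) * (m : ZMod N) = n)
    (hθa : θ (PresentedGroup.of 0) = .ofAdd 0) (hθt : θ (PresentedGroup.of 1) = .ofAdd 1) :
    (degreeMod _ d).comp (toAutSemidirect hw) = θ := by
  refine hom_ext ?_ ?_
  · simp [toAutSemidirect_of_zero, hθa, degreeMod]
  · simp [toAutSemidirect_of_one, hθt, degreeMod, stable]

lemma ker_toAutSemidirect_le (hN : m ^ d - n ^ d ∣ N) (hm : IsUnit (m : ZMod N))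
    (hwd : w ^ d = 1) (hw : ↑(w ^ k) * (m : ZMod N) = n) (hkd : IsCoprime k d)
    (hθa : θ (PresentedGroup.of 0) = .ofAdd 0) (hθt : θ (PresentedGroup.of 1) = .ofAdd 1) :
    (toAutSemidirect hw).ker ≤ ⁅θ.ker, θ.ker⁆ := by
  let q := QuotientGroup.mk' ⁅θ.ker, θ.ker⁆
  set a := q (PresentedGroup.of 0)
  set t := q (PresentedGroup.of 1)
  have htd : PresentedGroup.of 1 ^ d ∈ θ.ker := by
    rw [MonoidHom.mem_ker, map_pow, hθt, ← ofAdd_nsmul, nsmul_one, ZMod.natCast_self, ofAdd_zero]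
  have hcomm : Commute (t ^ d) a := by
    rw [← map_pow]
    exact commute_mk_of_mem htd hθa
  have hd : (MulAut.conj t ^ d) a = a := by
    rw [← map_pow, MulAut.conj_apply, hcomm.eq, mul_inv_cancel_right]
  have hk : (MulAut.conj t ^ k) (a ^ m) = a ^ n := by
    rw [← map_zpow, MulAut.conj_apply, ← zpow_neg]
    simpa only [map_mul, map_zpow] using congrArg q (relation m n k)
  have ha : a ^ N = 1 := by
    obtain ⟨c, hc⟩ := hN
    rw [← zpow_natCast, hc, zpow_mul, zpow_pow_sub_pow_eq_one hd hk, one_zpow]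
  obtain ⟨f, hfa, hft⟩ := exists_zmod_hom_mem_intertwiners ha hm hwd hw hkd hd hk
  have hq : (lift f t hft).comp (toAutSemidirect hw) = q := by
    refine hom_ext ?_ ?_
    · rw [MonoidHom.comp_apply, toAutSemidirect_of_zero, lift_inl, hfa]
    · rw [MonoidHom.comp_apply, toAutSemidirect_of_one, lift_stable]
  have hqker : q.ker = ⁅θ.ker, θ.ker⁆ := QuotientGroup.ker_mk' _
  rw [← hqker, ← hq, ← MonoidHom.comap_ker]
  exact Subgroup.ker_le_comap _ _

end Kernel

end BSt

theorem stmt_11_general {m n k : ℤ} {d : ℕ} (hd : d ≠ 0) (hmn : IsCoprime m n)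
    (hkd : IsCoprime k d) (θ : BSt m n k →* Multiplicative (ZMod d))
    (hθa : θ (PresentedGroup.of 0) = .ofAdd 0) (hθt : θ (PresentedGroup.of 1) = .ofAdd 1) :
    θ.ker.index = d ∧ Nonempty (Abelianization θ.ker ≃*
      Multiplicative (ℤ × ZMod (m ^ d - n ^ d).natAbs)) := by
  refine ⟨BSt.index_ker hθt, ?_⟩
  have hN : ((m ^ d - n ^ d).natAbs : ℤ) ∣ m ^ d - n ^ d := Int.natAbs_dvd.mpr dvd_rfl
  have hm := isUnit_intCast_zmod_of_dvd_pow_sub_pow hd hmn hN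
  obtain ⟨w, hwd, hw⟩ := exists_unit_pow_eq_one_and_zpow_mul_eq hd hmn hkd hN
  let φ := BSt.toAutSemidirect hw
  have hα : zmodUnitAut _ w ^ d = 1 := by rw [← map_pow, hwd, map_one]
  have hker : θ.ker = (AutSemidirect.prodHom hα).range.comap φ := by
    rw [AutSemidirect.range_prodHom, MonoidHom.comap_ker,
      BSt.degreeMod_comp_toAutSemidirect hw hθa hθt]
  obtain ⟨e⟩ := nonempty_abelianization_mulEquiv_of_eq_comap_range
    (BSt.toAutSemidirect_surjective hw) (AutSemidirect.prodHom_injective hd hα) hker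
    (BSt.ker_toAutSemidirect_le (Int.dvd_natAbs.mpr dvd_rfl) hm hwd hw hkd hθa hθt)
  exact ⟨e.trans (MulEquiv.prodMultiplicative _ _).symm⟩

theorem stmt_11 (p l : ℤ) (hp : 1 ≤ p) (hl : 1 ≤ l)
    (θ : BSt (2 * p - 1) (2 * p + 1) (2 * l - 1) →* Multiplicative (ZMod 2))
    (hθa : θ (PresentedGroup.of 0) = Multiplicative.ofAdd 0)
    (hθt : θ (PresentedGroup.of 1) = Multiplicative.ofAdd 1) :
    (MonoidHom.ker θ).index = 2 ∧
      Nonempty (Abelianization ↥(MonoidHom.ker θ) ≃*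
        Multiplicative (ℤ × ZMod (8 * p).natAbs)) := by
  have hmn : IsCoprime (2 * p - 1) (2 * p + 1) := ⟨p, 1 - p, by ring⟩
  have hkd : IsCoprime (2 * l - 1) (2 : ℕ) := ⟨-1, l, by push_cast; ring⟩
  have hN : ((2 * p - 1) ^ 2 - (2 * p + 1) ^ 2).natAbs = (8 * p).natAbs := by
    rw [← Int.natAbs_neg]
    ring_nf
  exact hN ▸ stmt_11_general two_ne_zero hmn hkd θ hθa hθt
end

section
/- For every integer n ≥ 1 and every integer k ≥ 1, the Baumslag–Strebel group G_{n, n+2, k} = ⟨a, t ∣ t^k a^n t^{−k} = a^{n+2}⟩ has a subgroup Γ' of index 2 whose abelianization A has no ℤ/2 direct summand, i.e. every x ∈ A with 2x = 0 satisfies x = 2y for some y ∈ A. -/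
/- The argument works for every `G = BSt m n k` with `n ≡ m + 2 mod 4`. Map `G` to a dicyclic group
of order `4N` so that one of `a`, `t` goes to the element `xa 0` outside the cyclic subgroup of
index two and the other to its generator; call them `u` and `v` respectively. The preimage `Γ` of
the cyclic subgroup is generated by `u ^ 2`, `v` and `u * v * u⁻¹`, and a class
`(u ^ 2) ^ p * v ^ q * (u * v * u⁻¹) ^ r` of order at most two in the abelianization of `Γ` has
`N ∣ q - r`, since `Γ` maps to a cyclic group of order `2N`, as well as vanishing exponent sum in
`t`. Rewriting the relation inside `Γ` then shows that the class is a square: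

* `m` and `n` even: `N = 0` and `u = a`, so `q = r = 0`, and `u ^ 2` has odd order;
* `m` and `n` odd, `k` even: `N = 2 * |k|` and `u = a`, so `q = -r` is a multiple of `k`, and an odd
  power of `u ^ 2` is a `k`-th power;
* `m`, `n` and `k` odd: `N = 2` and `u = t`, so `p = 0` and `q - r` is even, and the relation
  `(u * v * u⁻¹) ^ m = v ^ n` makes `v * (u * v * u⁻¹)` a square. -/

open Subgroup

/-- A group is 2-avoiding if `ℤ/2` is not a direct summand of its abelianization (for finitely
generated groups), encoded as: every element of the abelianization killed by two is a double. The
abelianization is written multiplicatively. -/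
def IsTwoAvoiding (G : Type*) [Group G] : Prop :=
  ∀ x : Abelianization G, x ^ 2 = 1 → IsSquare x

section CommGroup

variable {A : Type*} [CommGroup A]

theorem isSquare_of_odd_zpow {x : A} {j : ℤ} (hj : Odd j) (hx : IsSquare (x ^ j)) :
    IsSquare x := by
  have h := hx.mul ((odd_one.sub_odd hj).isSquare_zpow x)
  rwa [← zpow_add, add_sub_cancel, zpow_one] at h

theorem mem_closure_triple {x y z w : A} :
    w ∈ closure {x, y, z} ↔ ∃ p q r : ℤ, x ^ p * y ^ q * z ^ r = w := by
  rw [Set.insert_eq, Subgroup.closure_union, mem_sup]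
  simp only [mem_closure_singleton, mem_closure_pair]
  constructor
  · rintro ⟨_, ⟨p, rfl⟩, _, ⟨q, r, rfl⟩, rfl⟩
    exact ⟨p, q, r, mul_assoc ..⟩
  · rintro ⟨p, q, r, rfl⟩
    exact ⟨_, ⟨p, rfl⟩, _, ⟨q, r, rfl⟩, (mul_assoc ..).symm⟩

end CommGroup

section IndexTwo

variable {G : Type*} [Group G] {H : Subgroup G} {u v : G}

theorem mul_mem_or_mem_of_closure_pair_eq_top (huv : closure {u, v} = ⊤) (hsq : u ^ 2 ∈ H)
    (hv : v ∈ H) (hconj : u * v * u⁻¹ ∈ H) (g : G) : u * g ∈ H ∨ g ∈ H := by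
  have hg : g ∈ closure {u, v} := huv ▸ mem_top g
  induction hg using closure_induction_left with
  | one => exact .inr H.one_mem
  | mul_left x hx y _ ih =>
    rcases hx with rfl | rfl
    · rw [← mul_assoc, ← sq, H.mul_mem_cancel_left hsq]
      exact ih.symm
    · rwa [H.mul_mem_cancel_left hv, show u * (x * y) = u * x * u⁻¹ * (u * y) by group,
        H.mul_mem_cancel_left hconj]
  | inv_mul_cancel x hx y _ ih =>
    rcases hx with rfl | rfl
    · rw [mul_inv_cancel_left, show x⁻¹ * y = (x ^ 2)⁻¹ * (x * y) by group,
        H.mul_mem_cancel_left (H.inv_mem hsq)]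
      exact ih.symm
    · rwa [H.mul_mem_cancel_left (H.inv_mem hv),
        show u * (x⁻¹ * y) = (u * x * u⁻¹)⁻¹ * (u * y) by group,
        H.mul_mem_cancel_left (H.inv_mem hconj)]

theorem index_eq_two_of_closure_pair_eq_top (huv : closure {u, v} = ⊤) (hu : u ∉ H)
    (hsq : u ^ 2 ∈ H) (hv : v ∈ H) (hconj : u * v * u⁻¹ ∈ H) : H.index = 2 :=
  index_eq_two_iff_exists_notMem_and'.2
    ⟨u, hu, mul_mem_or_mem_of_closure_pair_eq_top huv hsq hv hconj⟩

theorem closure_triple_eq_of_closure_pair_eq_top (huv : closure {u, v} = ⊤) (hu : u ∉ H)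
    (hsq : u ^ 2 ∈ H) (hv : v ∈ H) (hconj : u * v * u⁻¹ ∈ H) :
    closure {u ^ 2, v, u * v * u⁻¹} = H := by
  have hle : closure {u ^ 2, v, u * v * u⁻¹} ≤ H := by
    rw [closure_le]
    rintro x (rfl | rfl | rfl) <;> assumption
  refine le_antisymm hle fun g hg => ?_
  refine (mul_mem_or_mem_of_closure_pair_eq_top huv (subset_closure (by simp))
    (subset_closure (by simp)) (subset_closure (by simp)) g).resolve_left fun hug => hu ?_
  exact (H.mul_mem_cancel_right hg).1 (hle hug)

end IndexTwo

section QuaternionGroup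

open QuaternionGroup

variable {N : ℕ}

theorem a_one_zpow (i : ℤ) : (a 1 : QuaternionGroup N) ^ i = a i := by
  have h (j : ℕ) : (a (-(j : ZMod (2 * N))) : QuaternionGroup N) = (a j)⁻¹ := rfl
  cases i with
  | ofNat i => simp
  | negSucc i => rw [zpow_negSucc, a_one_pow, ← h]; simp

theorem a_one_zpow_eq_one_iff {i : ℤ} : (a 1 : QuaternionGroup N) ^ i = 1 ↔ 2 * (N : ℤ) ∣ i := by
  rw [← orderOf_dvd_iff_zpow_eq_one, orderOf_a_one, Nat.cast_mul, Nat.cast_ofNat]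

theorem xa_zero_notMem_zpowers_a_one : (xa 0 : QuaternionGroup N) ∉ zpowers (a 1) := by
  rintro ⟨i, hi⟩
  simp [a_one_zpow] at hi

theorem xa_zero_conj_a_one : (xa 0 : QuaternionGroup N) * a 1 * (xa 0)⁻¹ = (a 1)⁻¹ := by
  rw [mul_inv_eq_iff_eq_mul, xa_mul_a]
  change _ = a (-1) * xa 0
  simp

theorem xa_zero_zpow_two_mul (i : ℤ) : (xa 0 : QuaternionGroup N) ^ (2 * i) = a 1 ^ (N * i) := by
  rw [zpow_mul, zpow_ofNat, xa_sq, zpow_mul, zpow_natCast, a_one_pow]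

theorem xa_zero_zpow_two_mul_add_one (i : ℤ) :
    (xa 0 : QuaternionGroup N) ^ (2 * i + 1) = a 1 ^ (N * i) * xa 0 := by
  rw [zpow_add_one, xa_zero_zpow_two_mul]

theorem a_one_zpow_conj_xa_zero_zpow (i k : ℤ) :
    (a 1 : QuaternionGroup N) ^ k * xa 0 ^ (2 * i + 1) * a 1 ^ (-k) =
      a 1 ^ (2 * k + N * i) * xa 0 := by
  have hcomm : xa 0 * a 1 ^ (-k) = a 1 ^ k * (xa 0 : QuaternionGroup N) := by
    rw [← mul_inv_eq_iff_eq_mul, ← conj_zpow, xa_zero_conj_a_one, inv_zpow', neg_neg]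
  rw [xa_zero_zpow_two_mul_add_one, mul_assoc, mul_assoc, hcomm, ← mul_assoc, ← mul_assoc,
    ← zpow_add, ← zpow_add]
  ring_nf

theorem xa_zero_zpow_conj_a_one_zpow {k : ℤ} (hk : Odd k) (i : ℤ) :
    (xa 0 : QuaternionGroup N) ^ k * a 1 ^ i * xa 0 ^ (-k) = a 1 ^ (-i) := by
  obtain ⟨l, rfl⟩ := hk
  rw [xa_zero_zpow_two_mul_add_one, zpow_neg, xa_zero_zpow_two_mul_add_one, mul_inv_rev]
  calc _ = a 1 ^ (N * l) * (xa 0 * a 1 ^ i * (xa 0)⁻¹) * (a 1 ^ (N * l))⁻¹ := by group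
    _ = a 1 ^ (N * l) * a 1 ^ (-i) * a 1 ^ (-(N * l)) := by
      rw [← conj_zpow, xa_zero_conj_a_one, inv_zpow', zpow_neg _ (N * l)]
    _ = a 1 ^ (-i) := by rw [← zpow_add, ← zpow_add]; ring_nf

end QuaternionGroup

/-- A dicyclic quotient of a two-generator group: generators `u` and `v` of `G`, together with a
homomorphism to the dicyclic group of order `4N` (infinite dihedral for `N = 0`) under which `v`
goes to the generator `a 1` of the cyclic subgroup and `u` to `xa 0`, which inverts it. -/
structure DicyclicMarking (G : Type*) [Group G] (N : ℕ) where
  toHom : G →* QuaternionGroup N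
  u : G
  v : G
  map_u : toHom u = QuaternionGroup.xa 0
  map_v : toHom v = QuaternionGroup.a 1
  closure_eq_top : closure {u, v} = ⊤

namespace DicyclicMarking

open QuaternionGroup

variable {G : Type*} [Group G] {N : ℕ} (M : DicyclicMarking G N)

/-- The preimage of the cyclic subgroup `⟨a 1⟩` of the dicyclic group. -/
def rotations : Subgroup G :=
  (zpowers (a 1)).comap M.toHom

theorem u_notMem_rotations : M.u ∉ M.rotations := by
  rw [rotations, mem_comap, M.map_u]
  exact xa_zero_notMem_zpowers_a_one

theorem u_sq_mem_rotations : M.u ^ 2 ∈ M.rotations :=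
  mem_zpowers_iff.2
    ⟨N, by rw [map_pow, M.map_u, xa_sq, zpow_natCast, a_one_pow]⟩

theorem v_mem_rotations : M.v ∈ M.rotations :=
  mem_zpowers_iff.2 ⟨1, by rw [M.map_v, zpow_one]⟩

theorem conj_v_mem_rotations : M.u * M.v * M.u⁻¹ ∈ M.rotations :=
  mem_zpowers_iff.2
    ⟨-1, by rw [map_mul, map_mul, map_inv, M.map_u, M.map_v, xa_zero_conj_a_one, zpow_neg_one]⟩

theorem index_rotations : M.rotations.index = 2 :=
  index_eq_two_of_closure_pair_eq_top M.closure_eq_top M.u_notMem_rotations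
    M.u_sq_mem_rotations M.v_mem_rotations M.conj_v_mem_rotations

/-- The generator `u ^ 2` of the index-two subgroup `M.rotations`. -/
def uSq : M.rotations := ⟨M.u ^ 2, M.u_sq_mem_rotations⟩

/-- The generator `v` of the index-two subgroup `M.rotations`. -/
def vRot : M.rotations := ⟨M.v, M.v_mem_rotations⟩

/-- The generator `u * v * u⁻¹` of the index-two subgroup `M.rotations`. -/
def vConj : M.rotations := ⟨M.u * M.v * M.u⁻¹, M.conj_v_mem_rotations⟩

theorem closure_generators_eq_top : closure {M.uSq, M.vRot, M.vConj} = ⊤ := by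
  apply map_injective M.rotations.subtype_injective
  rw [MonoidHom.map_closure, ← MonoidHom.range_eq_map, range_subtype]
  simp only [Set.image_insert_eq, Set.image_singleton]
  exact closure_triple_eq_of_closure_pair_eq_top M.closure_eq_top M.u_notMem_rotations
    M.u_sq_mem_rotations M.v_mem_rotations M.conj_v_mem_rotations

open Abelianization

theorem exists_zpow_eq (x : Abelianization M.rotations) :
    ∃ p q r : ℤ, of M.uSq ^ p * of M.vRot ^ q * of M.vConj ^ r = x := by
  have hsurj : (⊤ : Subgroup M.rotations).map of = ⊤ :=
    map_top_of_surjective _ (QuotientGroup.mk'_surjective _)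
  rw [← mem_closure_triple]
  rw [← M.closure_generators_eq_top, MonoidHom.map_closure, Set.image_insert_eq,
    Set.image_pair] at hsurj
  exact hsurj ▸ mem_top x

open scoped IsMulCommutative in
theorem dvd_sub_of_sq_eq_one {p q r : ℤ}
    (h : (of M.uSq ^ p * of M.vRot ^ q * of M.vConj ^ r) ^ 2 = 1) : (N : ℤ) ∣ q - r := by
  let ρ : Abelianization M.rotations →* zpowers (a 1 : QuaternionGroup N) :=
    lift (M.toHom.subgroupComap _)
  have hρ (g : M.rotations) : (ρ (of g) : QuaternionGroup N) = M.toHom g := rfl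
  have hρ_uSq : (ρ (of M.uSq) : QuaternionGroup N) = a 1 ^ (N : ℤ) := by
    rw [hρ, uSq, map_pow, M.map_u, xa_sq, zpow_natCast, a_one_pow]
  have hρ_vRot : (ρ (of M.vRot) : QuaternionGroup N) = a 1 := M.map_v
  have hρ_vConj : (ρ (of M.vConj) : QuaternionGroup N) = a 1 ^ (-1 : ℤ) := by
    rw [hρ, vConj, map_mul, map_mul, map_inv, M.map_u, M.map_v, xa_zero_conj_a_one, zpow_neg_one]
  have hpow : (a 1 : QuaternionGroup N) ^ (2 * (N * p + q - r)) = 1 := by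
    have h' := congrArg (fun x => (ρ x : QuaternionGroup N)) h
    simp only [map_mul, map_zpow, map_one, coe_mul, coe_zpow, coe_one, hρ_uSq,
      hρ_vRot, hρ_vConj, ← zpow_mul, ← zpow_add, ← zpow_natCast, Nat.cast_ofNat] at h'
    rw [← h']
    ring_nf
  have hdvd : (N : ℤ) ∣ N * p + q - r :=
    Int.dvd_of_mul_dvd_mul_left two_ne_zero (a_one_zpow_eq_one_iff.1 hpow)
  rwa [add_sub_assoc, dvd_add_right (dvd_mul_right _ _)] at hdvd

theorem map_eq_one_of_sq_eq_one {Z : Type*} [CommGroup Z] [IsMulTorsionFree Z] (ψ : G →* Z)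
    {p q r : ℤ} (h : (of M.uSq ^ p * of M.vRot ^ q * of M.vConj ^ r) ^ 2 = 1) :
    ψ M.u ^ (2 * p) * ψ M.v ^ (q + r) = 1 := by
  have h' := congrArg (lift (ψ.comp M.rotations.subtype)) h
  rw [map_pow, map_one, pow_eq_one_iff_left two_ne_zero] at h'
  simp only [map_mul, map_zpow, lift_apply_of, MonoidHom.comp_apply, subtype_apply, uSq, vRot,
    vConj, map_pow, map_inv, mul_inv_cancel_comm] at h'
  rw [← h', zpow_add, ← mul_assoc, zpow_mul, zpow_ofNat]

theorem isTwoAvoiding_of_isSquare_uSq (hN : 4 ∣ N) {Z : Type*} [CommGroup Z] [IsMulTorsionFree Z]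
    (ψ : G →* Z) (hu : ψ M.u = 1) (hv : ψ M.v ≠ 1) (hsq : IsSquare (of M.uSq)) :
    IsTwoAvoiding M.rotations := by
  intro x hx
  obtain ⟨p, q, r, rfl⟩ := M.exists_zpow_eq x
  have hqr : q + r = 0 := by
    simpa [hu, hv] using M.map_eq_one_of_sq_eq_one ψ hx
  have hdvd : (4 : ℤ) ∣ q - r := (Int.natCast_dvd_natCast.2 hN).trans (M.dvd_sub_of_sq_eq_one hx)
  have hq : Even q := by grind
  have hr : Even r := by grind
  exact ((hsq.zpow p).mul (hq.isSquare_zpow _)).mul (hr.isSquare_zpow _)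

theorem isTwoAvoiding_of_isSquare_vRot_mul_vConj (hN : 2 ∣ N) {Z : Type*} [CommGroup Z]
    [IsMulTorsionFree Z] (ψ : G →* Z) (hu : ψ M.u ≠ 1) (hv : ψ M.v = 1)
    (hsq : IsSquare (of M.vRot * of M.vConj)) : IsTwoAvoiding M.rotations := by
  intro x hx
  obtain ⟨p, q, r, rfl⟩ := M.exists_zpow_eq x
  obtain rfl : p = 0 := by
    simpa [hv, hu] using M.map_eq_one_of_sq_eq_one ψ hx
  have hqr : Even (q - r) :=
    even_iff_two_dvd.2 ((Int.natCast_dvd_natCast.2 hN).trans (M.dvd_sub_of_sq_eq_one hx))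
  have hx_eq : of M.uSq ^ (0 : ℤ) * of M.vRot ^ q * of M.vConj ^ r =
      of M.vRot ^ (q - r) * (of M.vRot * of M.vConj) ^ r := by
    rw [zpow_zero, one_mul, mul_zpow, ← mul_assoc, ← zpow_add, sub_add_cancel]
  rw [hx_eq]
  exact (hqr.isSquare_zpow _).mul (hsq.zpow r)

end DicyclicMarking

namespace BSt

variable {m n k : ℤ}

/-- The generator `a` of the Baumslag–Strebel group. -/
def a : BSt m n k := PresentedGroup.of 0

/-- The stable letter `t` of the Baumslag–Strebel group. -/
def t : BSt m n k := PresentedGroup.of 1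

theorem t_zpow_mul_a_zpow_mul_t_zpow :
    (t : BSt m n k) ^ k * a ^ m * t ^ (-k) = a ^ n := by
  have h : (t : BSt m n k) ^ k * a ^ m * t ^ (-k) * a ^ (-n) = 1 :=
    PresentedGroup.one_of_mem (rels := {BStRel m n k}) rfl
  rwa [zpow_neg a, mul_inv_eq_one] at h

theorem closure_a_t : closure {(a : BSt m n k), t} = ⊤ := by
  rw [← PresentedGroup.closure_range_of, ← Matrix.range_cons_cons_empty _ _ ![]]
  congr 2
  ext i
  fin_cases i <;> rfl

variable {H : Type*} [Group H]

/-- The homomorphism out of the Baumslag–Strebel group determined by images of `a` and `t` that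
satisfy its relation. -/
def lift (x y : H) (h : y ^ k * x ^ m * y ^ (-k) = x ^ n) : BSt m n k →* H :=
  PresentedGroup.toGroup (f := ![x, y]) <| by
    rintro _ rfl
    simp only [BStRel, map_mul, map_zpow, FreeGroup.lift_apply_of]
    simp [← h]

theorem lift_a (x y : H) (h : y ^ k * x ^ m * y ^ (-k) = x ^ n) : lift x y h a = x :=
  PresentedGroup.toGroup.of _

theorem lift_t (x y : H) (h : y ^ k * x ^ m * y ^ (-k) = x ^ n) : lift x y h t = y :=
  PresentedGroup.toGroup.of _

/-- The exponent sum of `t`. -/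
def exponentSum : BSt m n k →* Multiplicative ℤ :=
  lift 1 (.ofAdd 1) (by simp)

theorem exponentSum_a : exponentSum (a : BSt m n k) = 1 :=
  lift_a ..

theorem exponentSum_t_ne_one : exponentSum (t : BSt m n k) ≠ 1 := by
  rw [exponentSum, lift_t]
  decide

variable {N : ℕ}

open QuaternionGroup (xa)

/-- The marking of the Baumslag–Strebel group with `u = a` and `v = t`. -/
def markingAT (h : (QuaternionGroup.a 1 : QuaternionGroup N) ^ k * xa 0 ^ m *
    QuaternionGroup.a 1 ^ (-k) = xa 0 ^ n) : DicyclicMarking (BSt m n k) N where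
  toHom := lift _ _ h
  u := a
  v := t
  map_u := lift_a ..
  map_v := lift_t ..
  closure_eq_top := closure_a_t

/-- The marking of the Baumslag–Strebel group with `u = t` and `v = a`. -/
def markingTA (h : (xa 0 : QuaternionGroup N) ^ k * QuaternionGroup.a 1 ^ m * xa 0 ^ (-k) =
    QuaternionGroup.a 1 ^ n) : DicyclicMarking (BSt m n k) N where
  toHom := lift _ _ h
  u := t
  v := a
  map_u := lift_t ..
  map_v := lift_a ..
  closure_eq_top := Set.pair_comm (a : BSt m n k) t ▸ closure_a_t

open Abelianization (of)

theorem isSquare_uSq_markingAT_of_even (hm : Even m) (hmn : n ≡ m + 2 [ZMOD 4])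
    (h : (QuaternionGroup.a 1 : QuaternionGroup N) ^ k * xa 0 ^ m * QuaternionGroup.a 1 ^ (-k) =
      xa 0 ^ n) : IsSquare (of (markingAT h).uSq) := by
  obtain ⟨i, rfl⟩ := hm.two_dvd
  obtain ⟨j, rfl⟩ : (2 : ℤ) ∣ n := by grind [Int.ModEq]
  set M := markingAT h
  have hrel : M.vRot ^ k * M.uSq ^ i * M.vRot ^ (-k) = M.uSq ^ j := by
    apply Subtype.ext
    change t ^ k * (a ^ 2) ^ i * t ^ (-k) = (a ^ 2) ^ j
    rw [← zpow_ofNat a 2, ← zpow_mul, ← zpow_mul, t_zpow_mul_a_zpow_mul_t_zpow]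
  have hpow : of M.uSq ^ (j - i) = 1 := by
    have hab := congrArg of hrel
    simp only [map_mul, map_zpow] at hab
    rw [zpow_sub, ← hab, zpow_neg, mul_inv_cancel_comm, mul_inv_cancel]
  refine isSquare_of_odd_zpow (j := j - i) (by grind [Int.ModEq]) ?_
  exact hpow ▸ IsSquare.one

theorem isSquare_uSq_markingAT_of_odd (hm : Odd m) (hmn : n ≡ m + 2 [ZMOD 4]) (hk : Even k)
    (h : (QuaternionGroup.a 1 : QuaternionGroup N) ^ k * xa 0 ^ m * QuaternionGroup.a 1 ^ (-k) =
      xa 0 ^ n) : IsSquare (of (markingAT h).uSq) := by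
  obtain ⟨i, rfl⟩ := hm
  obtain ⟨j, rfl⟩ : Odd n := by grind [Int.ModEq]
  set M := markingAT h
  have hrel : M.vRot ^ k * M.uSq ^ i * M.vConj ^ (-k) = M.uSq ^ j := by
    apply Subtype.ext
    change t ^ k * (a ^ 2) ^ i * (a * t * a⁻¹) ^ (-k) = (a ^ 2) ^ j
    rw [← zpow_ofNat a 2, ← zpow_mul, ← zpow_mul, conj_zpow]
    calc _ = t ^ k * a ^ (2 * i + 1) * t ^ (-k) * a⁻¹ := by rw [zpow_add_one]; group
      _ = a ^ (2 * j) := by rw [t_zpow_mul_a_zpow_mul_t_zpow, zpow_add_one, mul_inv_cancel_right]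
  have hpow : of M.uSq ^ (j - i) = of M.vRot ^ k * of M.vConj ^ (-k) := by
    have hab := congrArg of hrel
    simp only [map_mul, map_zpow] at hab
    rw [zpow_sub, ← hab, mul_right_comm, mul_inv_cancel_right]
  refine isSquare_of_odd_zpow (j := j - i) (by grind [Int.ModEq]) ?_
  exact hpow ▸ (hk.isSquare_zpow _).mul (hk.neg.isSquare_zpow _)

theorem isSquare_vRot_mul_vConj_markingTA (hm : Odd m) (hn : Odd n) (hk : Odd k)
    (h : (xa 0 : QuaternionGroup N) ^ k * QuaternionGroup.a 1 ^ m * xa 0 ^ (-k) =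
      QuaternionGroup.a 1 ^ n) :
    IsSquare (of (markingTA h).vRot * of (markingTA h).vConj) := by
  obtain ⟨l, rfl⟩ := hk
  set M := markingTA h
  have hrel : M.uSq ^ l * M.vConj ^ m * M.uSq ^ (-l) = M.vRot ^ n := by
    apply Subtype.ext
    change (t ^ 2) ^ l * (t * a * t⁻¹) ^ m * (t ^ 2) ^ (-l) = a ^ n
    rw [← t_zpow_mul_a_zpow_mul_t_zpow, ← zpow_ofNat t 2, conj_zpow]
    group
  have hpow : of M.vConj ^ m = of M.vRot ^ n := by
    have hab := congrArg of hrel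
    simp only [map_mul, map_zpow] at hab
    rw [← hab, zpow_neg, mul_inv_cancel_comm]
  have hprod : of M.vRot * of M.vConj = of M.vRot ^ (1 + n) * of M.vConj ^ (1 - m) := by
    rw [zpow_add, zpow_sub, hpow, zpow_one, zpow_one, mul_mul_mul_comm, mul_inv_cancel, mul_one]
  rw [hprod]
  exact ((odd_one.add_odd hn).isSquare_zpow _).mul ((odd_one.sub_odd hm).isSquare_zpow _)

theorem exists_isTwoAvoiding_of_even (hm : Even m) (hmn : n ≡ m + 2 [ZMOD 4]) :
    ∃ Γ : Subgroup (BSt m n k), Γ.index = 2 ∧ IsTwoAvoiding Γ := by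
  have h : (QuaternionGroup.a 1 : QuaternionGroup 0) ^ k * xa 0 ^ m *
      QuaternionGroup.a 1 ^ (-k) = xa 0 ^ n := by
    obtain ⟨i, rfl⟩ := hm.two_dvd
    obtain ⟨j, rfl⟩ : (2 : ℤ) ∣ n := by grind [Int.ModEq]
    simp [xa_zero_zpow_two_mul]
  exact ⟨_, (markingAT h).index_rotations,
    (markingAT h).isTwoAvoiding_of_isSquare_uSq (dvd_zero 4) exponentSum exponentSum_a
      exponentSum_t_ne_one (isSquare_uSq_markingAT_of_even hm hmn h)⟩

theorem exists_isTwoAvoiding_of_odd_of_even (hm : Odd m) (hmn : n ≡ m + 2 [ZMOD 4])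
    (hk : Even k) : ∃ Γ : Subgroup (BSt m n k), Γ.index = 2 ∧ IsTwoAvoiding Γ := by
  have h : (QuaternionGroup.a 1 : QuaternionGroup (2 * k.natAbs)) ^ k * xa 0 ^ m *
      QuaternionGroup.a 1 ^ (-k) = xa 0 ^ n := by
    obtain ⟨i, rfl⟩ := hm
    obtain ⟨j, rfl⟩ : Odd n := by grind [Int.ModEq]
    rw [a_one_zpow_conj_xa_zero_zpow, xa_zero_zpow_two_mul_add_one, mul_left_inj, ← mul_inv_eq_one,
      ← zpow_neg, ← zpow_add, a_one_zpow_eq_one_iff]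
    have hij : Odd (i - j) := by grind [Int.ModEq]
    push_cast
    rcases abs_choice k with hk_abs | hk_abs <;> rw [hk_abs]
    · obtain ⟨s, hs⟩ := hij.add_one.two_dvd
      exact ⟨s, by linear_combination 2 * k * hs⟩
    · obtain ⟨s, hs⟩ := (hij.sub_odd odd_one).two_dvd
      exact ⟨s, by linear_combination -2 * k * hs⟩
  have hN : 4 ∣ 2 * k.natAbs := by grind
  exact ⟨_, (markingAT h).index_rotations,
    (markingAT h).isTwoAvoiding_of_isSquare_uSq hN exponentSum exponentSum_a
      exponentSum_t_ne_one (isSquare_uSq_markingAT_of_odd hm hmn hk h)⟩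

theorem exists_isTwoAvoiding_of_odd_of_odd (hm : Odd m) (hmn : n ≡ m + 2 [ZMOD 4])
    (hk : Odd k) : ∃ Γ : Subgroup (BSt m n k), Γ.index = 2 ∧ IsTwoAvoiding Γ := by
  have h : (xa 0 : QuaternionGroup 2) ^ k * QuaternionGroup.a 1 ^ m * xa 0 ^ (-k) =
      QuaternionGroup.a 1 ^ n := by
    rw [xa_zero_zpow_conj_a_one_zpow hk, ← mul_inv_eq_one, ← zpow_neg, ← zpow_add,
      a_one_zpow_eq_one_iff]
    grind [Int.ModEq]
  have hn : Odd n := by grind [Int.ModEq]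
  exact ⟨_, (markingTA h).index_rotations,
    (markingTA h).isTwoAvoiding_of_isSquare_vRot_mul_vConj (dvd_refl 2) exponentSum
      exponentSum_t_ne_one exponentSum_a (isSquare_vRot_mul_vConj_markingTA hm hn hk h)⟩

end BSt

theorem stmt_12_general (m n k : ℤ) (hmn : n ≡ m + 2 [ZMOD 4]) :
    ∃ Γ : Subgroup (BSt m n k), Γ.index = 2 ∧ IsTwoAvoiding Γ := by
  rcases m.even_or_odd with hm | hm
  · exact BSt.exists_isTwoAvoiding_of_even hm hmn
  rcases k.even_or_odd with hk | hk
  · exact BSt.exists_isTwoAvoiding_of_odd_of_even hm hmn hk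
  · exact BSt.exists_isTwoAvoiding_of_odd_of_odd hm hmn hk

theorem stmt_12 (n k : ℤ) (hn : 1 ≤ n) (hk : 1 ≤ k) :
    ∃ Γ' : Subgroup (BSt n (n + 2) k), Γ'.index = 2 ∧
      ∀ x : Abelianization ↥Γ', x ^ 2 = 1 → ∃ y : Abelianization ↥Γ', x = y ^ 2 := by
  simpa only [IsTwoAvoiding, isSquare_iff_exists_sq] using stmt_12_general n (n + 2) k rfl
end

section
/- Let p ≥ 0 be an integer and let Γ = BG(2p+2, 2p) = ⟨a, t ∣ t a t⁻¹ a^{2p+2} t a⁻¹ t⁻¹ = a^{2p}⟩. Let θ : Γ → ℤ/2 be the group homomorphism determined by θ(a) = 1 and θ(t) = 1 (well defined since the relator has exponent sum 2 in a and 0 in t), and let Γ' = ker θ. Then Γ' has index 2 in Γ and the abelianization of Γ' is isomorphic to ℤ × ℤ, the free abelian group of rank 2. -/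
/-- The relator `t a t⁻¹ a^m t a⁻¹ t⁻¹ a^{-n}` of the Baumslag–Gersten group, in the
free group on two generators, where `a` is `FreeGroup.of 0` and `t` is `FreeGroup.of 1`. -/
def BGRel (m n : ℤ) : FreeGroup (Fin 2) :=
  FreeGroup.of 1 * FreeGroup.of 0 * (FreeGroup.of 1)⁻¹ * FreeGroup.of 0 ^ m *
    FreeGroup.of 1 * (FreeGroup.of 0)⁻¹ * (FreeGroup.of 1)⁻¹ * FreeGroup.of 0 ^ (-n)

/-- The Baumslag–Gersten group `BG(m,n) = ⟨a, t ∣ t a t⁻¹ a^m t a⁻¹ t⁻¹ = a^n⟩`. -/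
abbrev BG (m n : ℤ) : Type :=
  PresentedGroup ({BGRel m n} : Set (FreeGroup (Fin 2)))

/-!
Write `Γ = BG(2l + 2d, 2l)`. The relation says that conjugation by `⁅t, a⁆` takes `a ^ (2l + 2d)`
to `a ^ (2l)`. Since `⁅t, a⁆` lies in `Γ' = ker θ`, the class of `x = a²` in `Γ'ᵃᵇ` satisfies
`x ^ d = 1`. By Schreier's method `Γ'` is generated by `x`, `y = t a⁻¹` and `z = a t`.
There are no further relations in `Γ'ᵃᵇ`: if `y ^ i z ^ j x ^ k` is trivial there, then the exponent
sum of `t` gives `i + j = 0`, the map of `Γ` onto the infinite dihedral group, under which `Γ'`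
lands in the rotations, gives `i = j`, and the exponent sum of `a` modulo `2d` gives `d ∣ k`.
Hence `Γ'ᵃᵇ ≅ ℤ² × ℤ/d`, and the theorem is the case `d = 1`.
-/

section GeneralGroups

variable {G Q : Type*} [Group G] [Group Q]

theorem index_ker_eq_card_of_prime (hQ : (Nat.card Q).Prime) {f : G →* Q} {g : G}
    (hg : f g ≠ 1) : f.ker.index = Nat.card Q := by
  have := Fact.mk hQ
  have hrange : f.range = ⊤ := f.range.eq_bot_or_eq_top_of_prime_card.resolve_left fun hbot =>
    hg (by simpa [hbot] using f.mem_range.2 ⟨g, rfl⟩)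
  rw [Subgroup.index_ker, hrange, Subgroup.card_top]

theorem mem_or_mul_inv_mem_of_closure_pair_eq_top {a t : G}
    (hgen : Subgroup.closure {a, t} = ⊤) {H : Subgroup G} (hx : a * a ∈ H)
    (hy : t * a⁻¹ ∈ H) (hz : a * t ∈ H) (g : G) : g ∈ H ∨ g * a⁻¹ ∈ H := by
  have hg : g ∈ Subgroup.closure {a, t} := hgen ▸ Subgroup.mem_top g
  induction hg using Subgroup.closure_induction_right with
  | one => exact Or.inl H.one_mem
  | mul_right g _ s hs ih =>
    rcases hs with rfl | rfl <;> rcases ih with h | h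
    · exact Or.inr (by simpa using h)
    · exact Or.inl (by simpa using H.mul_mem h hx)
    · exact Or.inr (by simpa [mul_assoc] using H.mul_mem h hy)
    · exact Or.inl (by simpa [mul_assoc] using H.mul_mem h hz)
  | mul_inv_cancel g _ s hs ih =>
    rcases hs with rfl | rfl <;> rcases ih with h | h
    · exact Or.inr (by simpa [mul_assoc] using H.mul_mem h (H.inv_mem hx))
    · exact Or.inl h
    · exact Or.inr (by simpa [mul_assoc] using H.mul_mem h (H.inv_mem hz))
    · exact Or.inl (by simpa [mul_assoc] using H.mul_mem h (H.inv_mem hy))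

theorem closure_ker_eq_top_of_closure_pair_eq_top {f : G →* Q} {a t : G}
    (hgen : Subgroup.closure {a, t} = ⊤) (ha : f a ≠ 1) {x y z : f.ker}
    (hx : (x : G) = a * a) (hy : (y : G) = t * a⁻¹) (hz : (z : G) = a * t) :
    Subgroup.closure {x, y, z} = ⊤ := by
  let H : Subgroup G := (Subgroup.closure {x, y, z}).map f.ker.subtype
  have mem_H {w : f.ker} (hw : w ∈ ({x, y, z} : Set f.ker)) : (w : G) ∈ H :=
    Subgroup.mem_map_of_mem _ (Subgroup.subset_closure hw)
  have H_le_ker : H ≤ f.ker := Subgroup.map_subtype_le _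
  refine (Subgroup.eq_top_iff' _).2 fun w => ?_
  suffices (w : G) ∈ H from (Subgroup.mem_map_iff_mem f.ker.subtype_injective).1 this
  refine (mem_or_mul_inv_mem_of_closure_pair_eq_top hgen (hx ▸ mem_H (by simp))
    (hy ▸ mem_H (by simp)) (hz ▸ mem_H (by simp)) w).resolve_right fun hwa => ha ?_
  have hfwa : f (w * a⁻¹) = 1 := H_le_ker hwa
  rwa [map_mul, map_inv, f.mem_ker.1 w.2, one_mul, inv_eq_one] at hfwa

theorem closure_image_abelianization_of_eq_top {s : Set G} (hs : Subgroup.closure s = ⊤) :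
    Subgroup.closure (Abelianization.of '' s) = ⊤ := by
  rw [← MonoidHom.map_closure, hs]
  exact Subgroup.map_top_of_surjective _ (QuotientGroup.mk'_surjective _)

theorem map_eq_one_of_abelianization_of_eq_one {f : G →* Q} (hf : ∀ g h, Commute (f g) (f h))
    {w : G} (hw : Abelianization.of w = 1) : f w = 1 := by
  have hle : commutator G ≤ f.ker := Subgroup.commutator_le.2 fun g _ h _ => by
    rw [MonoidHom.mem_ker, map_commutatorElement, commutatorElement_eq_one_iff_commute]
    exact hf g h
  exact hle ((QuotientGroup.eq_one_iff w).1 hw)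

theorem nonempty_mulEquiv_int_prod_int_prod_zmod {A : Type*} [CommGroup A] {x y z : A} {d : ℕ}
    (hgen : Subgroup.closure {x, y, z} = ⊤) (hx : x ^ d = 1)
    (hrel : ∀ i j k : ℤ, y ^ i * z ^ j * x ^ k = 1 → i = 0 ∧ j = 0 ∧ (d : ℤ) ∣ k) :
    Nonempty (A ≃* Multiplicative ((ℤ × ℤ) × ZMod d)) := by
  let toA : (ℤ × ℤ) × ZMod d →+ Additive A :=
    ((zmultiplesHom _ (Additive.ofMul y)).coprod (zmultiplesHom _ (Additive.ofMul z))).coprod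
      (ZMod.lift d ⟨zmultiplesHom _ (Additive.ofMul x), by simp [← ofMul_pow, hx]⟩)
  have toA_apply (i j k : ℤ) :
      toA ((i, j), (k : ZMod d)) = Additive.ofMul (y ^ i * z ^ j * x ^ k) := by
    simp [toA]
  have injective_toA : Function.Injective toA := by
    refine (injective_iff_map_eq_zero toA).2 ?_
    rintro ⟨⟨i, j⟩, c⟩ hc
    obtain ⟨k, rfl⟩ := ZMod.intCast_surjective c
    obtain ⟨rfl, rfl, hk⟩ := hrel i j k (by rwa [toA_apply, ofMul_eq_zero] at hc)
    simp [(ZMod.intCast_zmod_eq_zero_iff_dvd k d).2 hk]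
  have surjective_toA : Function.Surjective toA.toMultiplicativeLeft := by
    rw [← MonoidHom.range_eq_top, eq_top_iff, ← hgen, Subgroup.closure_le]
    rintro _ (rfl | rfl | rfl)
    · exact ⟨.ofAdd ((0, 0), (1 : ℤ)), by simpa using congrArg Additive.toMul (toA_apply 0 0 1)⟩
    · exact ⟨.ofAdd ((1, 0), (0 : ℤ)), by simpa using congrArg Additive.toMul (toA_apply 1 0 0)⟩
    · exact ⟨.ofAdd ((0, 1), (0 : ℤ)), by simpa using congrArg Additive.toMul (toA_apply 0 1 0)⟩
  exact ⟨(MulEquiv.ofBijective (M := Multiplicative ((ℤ × ℤ) × ZMod d)) (N := A)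
    toA.toMultiplicativeLeft ⟨injective_toA, surjective_toA⟩).symm⟩

end GeneralGroups

namespace BG

open scoped commutatorElement

theorem rel_eq_commutator_conj (m n : ℤ) :
    BGRel m n = ⁅FreeGroup.of (1 : Fin 2), FreeGroup.of 0⁆ * FreeGroup.of 0 ^ m *
      ⁅FreeGroup.of (1 : Fin 2), FreeGroup.of 0⁆⁻¹ * (FreeGroup.of 0 ^ n)⁻¹ := by
  simp only [BGRel, commutatorElement_def]
  group

variable {m n : ℤ}

/-- The generator `a` of `BG(m,n)`. -/
abbrev a : BG m n := PresentedGroup.of 0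

/-- The generator `t` of `BG(m,n)`. -/
abbrev t : BG m n := PresentedGroup.of 1

theorem closure_a_t : Subgroup.closure {(a : BG m n), t} = ⊤ := by
  rw [← PresentedGroup.closure_range_of]
  congr 1
  ext g
  simp [Fin.exists_fin_two, eq_comm]

theorem commutator_conj_a_zpow :
    ⁅(t : BG m n), (a : BG m n)⁆ * a ^ m * ⁅(t : BG m n), (a : BG m n)⁆⁻¹ = a ^ n := by
  have hrel : PresentedGroup.mk {BGRel m n} (BGRel m n) = 1 := PresentedGroup.one_of_mem rfl
  simp only [rel_eq_commutator_conj, map_mul, map_inv, map_zpow, map_commutatorElement,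
    mul_inv_eq_one] at hrel
  exact hrel

section Lift

variable {G : Type*} [Group G] {α τ : G}

/-- The universal property of `BG(m,n)`: the homomorphism sending `a` to `α` and `t` to `τ`. -/
def lift (h : ⁅τ, α⁆ * α ^ m * ⁅τ, α⁆⁻¹ = α ^ n) : BG m n →* G :=
  PresentedGroup.toGroup (f := ![α, τ]) <| by
    rintro _ rfl
    simp only [rel_eq_commutator_conj, map_mul, map_inv, map_zpow, map_commutatorElement,
      FreeGroup.lift_apply_of, mul_inv_eq_one]
    exact h

variable (h : ⁅τ, α⁆ * α ^ m * ⁅τ, α⁆⁻¹ = α ^ n)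

@[simp]
theorem lift_a : lift h a = α :=
  PresentedGroup.toGroup.of _

@[simp]
theorem lift_t : lift h t = τ :=
  PresentedGroup.toGroup.of _

end Lift

/-- The exponent sum of `t`. -/
def tExponent : BG m n →* Multiplicative ℤ :=
  lift (α := 1) (τ := .ofAdd 1) (by simp)

@[simp]
theorem tExponent_a : tExponent (a : BG m n) = 1 :=
  lift_a _

@[simp]
theorem tExponent_t : tExponent (t : BG m n) = .ofAdd 1 :=
  lift_t _

/-- The exponent sum of `a`, which the relation makes well defined modulo `m - n`. -/
def aExponent : BG m n →* Multiplicative (ZMod (m - n).natAbs) :=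
  lift (α := .ofAdd 1) (τ := 1) <| by
    have h : (m : ZMod (m - n).natAbs) = n := by
      rw [ZMod.intCast_eq_intCast_iff_dvd_sub, Int.natAbs_dvd, ← dvd_neg, neg_sub]
    simp [← ofAdd_zsmul, h]

@[simp]
theorem aExponent_a : aExponent (a : BG m n) = .ofAdd 1 :=
  lift_a _

@[simp]
theorem aExponent_t : aExponent (t : BG m n) = 1 :=
  lift_t _

/-- The action of `BG(2k,2l)` on the line in which `a` and `t` act by reflections in neighbouring
points; `DihedralGroup 0` is the infinite dihedral group. -/
def toDihedral {k l : ℤ} : BG (2 * k) (2 * l) →* DihedralGroup 0 :=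
  lift (α := .sr 0) (τ := .sr 1) <| by
    have hsq : DihedralGroup.sr (0 : ZMod 0) ^ (2 : ℤ) = 1 := by
      rw [zpow_two, DihedralGroup.sr_mul_self]
    rw [zpow_mul, zpow_mul, hsq, one_zpow, one_zpow, mul_one, mul_inv_cancel]

@[simp]
theorem toDihedral_a {k l : ℤ} : toDihedral (a : BG (2 * k) (2 * l)) = .sr 0 :=
  lift_a _

@[simp]
theorem toDihedral_t {k l : ℤ} : toDihedral (t : BG (2 * k) (2 * l)) = .sr 1 :=
  lift_t _

section Kernel

variable {k l : ℤ}

theorem abelianization_of_zpow_eq_zpow {C : Type*} [CommGroup C] {θ : BG (2 * k) (2 * l) →* C}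
    {x : θ.ker} (hx : (x : BG (2 * k) (2 * l)) = a * a) :
    Abelianization.of x ^ k = Abelianization.of x ^ l := by
  have commutator_mem_ker : ⁅(t : BG (2 * k) (2 * l)), (a : BG (2 * k) (2 * l))⁆ ∈ θ.ker := by
    rw [MonoidHom.mem_ker, map_commutatorElement, commutatorElement_eq_one_iff_commute]
    exact Commute.all _ _
  have hconj : IsConj (x ^ k) (x ^ l) := by
    refine isConj_iff.2 ⟨⟨_, commutator_mem_ker⟩, Subtype.ext ?_⟩
    simpa [hx, ← zpow_two, zpow_mul] using commutator_conj_a_zpow (m := 2 * k) (n := 2 * l)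
  simpa using isConj_iff_eq.1 (Abelianization.of.map_isConj hconj)

variable {Q : Type*} [Group Q] {θ : BG (2 * k) (2 * l) →* Q} {x y z : θ.ker}
  (hx : (x : BG (2 * k) (2 * l)) = a * a) (hy : (y : BG (2 * k) (2 * l)) = t * a⁻¹)
  (hz : (z : BG (2 * k) (2 * l)) = a * t)

include hx hy hz

theorem commute_toDihedral (hgen : Subgroup.closure {x, y, z} = ⊤) (g h : θ.ker) :
    Commute (toDihedral (g : BG (2 * k) (2 * l))) (toDihedral (h : BG (2 * k) (2 * l))) := by
  let rotations : Subgroup (DihedralGroup 0) := Subgroup.zpowers (.r 1)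
  have mem_rotations (g : θ.ker) : toDihedral (g : BG (2 * k) (2 * l)) ∈ rotations := by
    suffices ⊤ ≤ (rotations.comap toDihedral).comap θ.ker.subtype from this trivial
    rw [← hgen, Subgroup.closure_le]
    rintro _ (rfl | rfl | rfl)
    · exact ⟨0, by simp [hx]⟩
    · exact ⟨-1, by simp [hy]⟩
    · exact ⟨1, by simp [hz]⟩
  obtain ⟨i, hi⟩ := mem_rotations g
  obtain ⟨j, hj⟩ := mem_rotations h
  exact hi ▸ hj ▸ Commute.zpow_zpow_self _ i j

theorem eq_zero_and_dvd_of_abelianization_eq_one (hgen : Subgroup.closure {x, y, z} = ⊤)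
    {i j e : ℤ} (h : Abelianization.of (y ^ i * z ^ j * x ^ e) = 1) :
    i = 0 ∧ j = 0 ∧ k - l ∣ e := by
  have add_eq_zero : i + j = 0 := by
    have ht := map_eq_one_of_abelianization_of_eq_one
      (f := tExponent.comp θ.ker.subtype) (fun _ _ => Commute.all _ _) h
    simpa [hx, hy, hz, ← ofAdd_zsmul, ← ofAdd_add] using ht
  have sub_eq_zero : j - i = 0 := by
    have hrot := map_eq_one_of_abelianization_of_eq_one
      (f := toDihedral.comp θ.ker.subtype) (commute_toDihedral hx hy hz hgen) h
    have hr : DihedralGroup.r (Int.cast (j - i) : ZMod 0) = .r 0 := by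
      simpa [hx, hy, hz, sub_eq_neg_add] using hrot
    simpa [ZMod.intCast_zmod_eq_zero_iff_dvd, -Int.cast_sub] using DihedralGroup.r.inj hr
  have two_mul_dvd : 2 * k - 2 * l ∣ -i + j + 2 * e := by
    have ha := map_eq_one_of_abelianization_of_eq_one
      (f := aExponent.comp θ.ker.subtype) (fun _ _ => Commute.all _ _) h
    rw [← Int.natAbs_dvd, ← ZMod.intCast_zmod_eq_zero_iff_dvd, ← ofAdd_eq_one]
    simpa [hx, hy, hz, two_mul, ← ofAdd_zsmul, ← ofAdd_add, ← ofAdd_neg] using ha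
  obtain ⟨rfl, rfl⟩ : i = 0 ∧ j = 0 := by lia
  refine ⟨rfl, rfl, Int.dvd_of_mul_dvd_mul_left two_ne_zero ?_⟩
  simpa [mul_sub] using two_mul_dvd

end Kernel

end BG

open BG in
theorem stmt_14_general {m n d : ℤ} (hn : Even n) (hmn : m - n = 2 * d)
    (θ : BG m n →* Multiplicative (ZMod 2))
    (hθa : θ (PresentedGroup.of 0) = Multiplicative.ofAdd 1)
    (hθt : θ (PresentedGroup.of 1) = Multiplicative.ofAdd 1) :
    (MonoidHom.ker θ).index = 2 ∧
      Nonempty (Abelianization ↥(MonoidHom.ker θ) ≃*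
        Multiplicative ((ℤ × ℤ) × ZMod d.natAbs)) := by
  obtain ⟨l, rfl⟩ := even_iff_exists_two_mul.1 hn
  obtain ⟨k, rfl⟩ : ∃ k, m = 2 * k := ⟨l + d, by lia⟩
  obtain rfl : d = k - l := by lia
  have hθa_ne : θ a ≠ 1 := by simp [hθa]
  have hcard : Nat.card (Multiplicative (ZMod 2)) = 2 := by simp
  refine ⟨(index_ker_eq_card_of_prime (hcard.symm ▸ Nat.prime_two) hθa_ne).trans hcard, ?_⟩
  have sq_eq_one : θ a * θ a = 1 := by rw [hθa]; rfl
  have hθta : θ t = θ a := hθt.trans hθa.symm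
  let x : θ.ker := ⟨a * a, by simp [MonoidHom.mem_ker, sq_eq_one]⟩
  let y : θ.ker := ⟨t * a⁻¹, by simp [MonoidHom.mem_ker, hθta]⟩
  let z : θ.ker := ⟨a * t, by simp [MonoidHom.mem_ker, hθta, sq_eq_one]⟩
  have hgen : Subgroup.closure {x, y, z} = ⊤ :=
    closure_ker_eq_top_of_closure_pair_eq_top closure_a_t hθa_ne rfl rfl rfl
  refine nonempty_mulEquiv_int_prod_int_prod_zmod (x := Abelianization.of x)
    (y := Abelianization.of y) (z := Abelianization.of z) ?_ ?_ fun i j e h => ?_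
  · simpa [Set.image_insert_eq] using closure_image_abelianization_of_eq_top hgen
  · rw [pow_natAbs_eq_one, zpow_sub, abelianization_of_zpow_eq_zpow rfl, mul_inv_cancel]
  · rw [Int.natAbs_dvd]
    exact eq_zero_and_dvd_of_abelianization_eq_one rfl rfl rfl hgen (by simpa using h)

theorem stmt_14 (p : ℤ) (hp : 0 ≤ p)
    (θ : BG (2 * p + 2) (2 * p) →* Multiplicative (ZMod 2))
    (hθa : θ (PresentedGroup.of 0) = Multiplicative.ofAdd 1)
    (hθt : θ (PresentedGroup.of 1) = Multiplicative.ofAdd 1) :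
    (MonoidHom.ker θ).index = 2 ∧
      Nonempty (Abelianization ↥(MonoidHom.ker θ) ≃* Multiplicative (ℤ × ℤ)) := by
  obtain ⟨hindex, ⟨e⟩⟩ := stmt_14_general (d := 1) (even_two_mul p) (by ring) θ hθa hθt
  exact ⟨hindex, ⟨e.trans (AddEquiv.prodUnique (N := ZMod 1)).toMultiplicative⟩⟩
end

section
/- Let p ≥ 1 be an integer and let Γ = BG(2p+1, 2p−1) = ⟨a, t ∣ t a t⁻¹ a^{2p+1} t a⁻¹ t⁻¹ = a^{2p−1}⟩. Let θ : Γ → ℤ/2 be the group homomorphism determined by θ(a) = 1 and θ(t) = 1 (well defined since the relator has exponent sum 2 in a and 0 in t), and let Γ' = ker θ. Then Γ' has index 2 in Γ and the abelianization of Γ' is isomorphic to ℤ × ℤ/4. -/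
/-!
Put `x = a²`, `y = t a⁻¹`, `z = a t`. These elements of `Γ' = ker θ` generate it, because
multiplying by `a` exchanges the two cosets. The relator and its conjugate by `a` are words in
`x, y, z`; for `BG (n + 2d) n` with `n` odd they abelianize to `2(y - z) + (d + 2) x = 0` and
`2(z - y) + (d - 2) x = 0`. These are the only relations: any solution `(X, Y, Z)` in an abelian
group `M` defines a homomorphism from `Γ` to the wreath product of `M` and `ℤ/2` lying over `θ`, and
the coordinate at `1` restricts to a homomorphism `Γ' → M` with `x, y, z ↦ X, Y, Z`. When `d` is
odd, `y - z` has order `4|d|` and generates `x`, which leaves `ℤ × ℤ/4|d|`.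
-/

namespace BG

open Multiplicative (ofAdd toAdd)
open Additive (ofMul)
open Abelianization (of)

section IndexTwo

variable {G : Type*} [Group G] {θ : G →* Multiplicative (ZMod 2)} {a t : G}
  (ha : θ a = ofAdd 1) (ht : θ t = ofAdd 1)

/-- The element `a²` of the kernel of `θ`; the first of the three standard generators. -/
def kerSq : θ.ker := ⟨a * a, by rw [MonoidHom.mem_ker, map_mul, ha]; rfl⟩

/-- The element `t a⁻¹` of the kernel of `θ`; the second of the three standard generators. -/
def kerDiv : θ.ker := ⟨t * a⁻¹, by rw [MonoidHom.mem_ker, map_mul, map_inv, ha, ht]; rfl⟩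

/-- The element `a t` of the kernel of `θ`; the third of the three standard generators. -/
def kerMul : θ.ker := ⟨a * t, by rw [MonoidHom.mem_ker, map_mul, ha, ht]; rfl⟩

lemma index_ker_eq_two (ha : θ a = ofAdd 1) : θ.ker.index = 2 := by
  have hsurj : Function.Surjective θ := by
    refine Multiplicative.ofAdd.surjective.forall.2 fun b => ⟨a ^ b.val, ?_⟩
    rw [map_pow, ha, ← ofAdd_nsmul, nsmul_one, ZMod.natCast_zmod_val]
  rw [Subgroup.index_ker, MonoidHom.range_eq_top.mpr hsurj]
  simp

lemma mem_or_mul_inv_mem {H : Subgroup G} (hgen : Subgroup.closure {a, t} = ⊤)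
    (hsq : a * a ∈ H) (hdiv : t * a⁻¹ ∈ H) (hmul : a * t ∈ H) (g : G) :
    g ∈ H ∨ g * a⁻¹ ∈ H := by
  have hg : g ∈ Subgroup.closure {a, t} := hgen ▸ Subgroup.mem_top g
  induction hg using Subgroup.closure_induction_right with
  | one => exact .inl H.one_mem
  | mul_right g _ s hs ih =>
    rcases ih with hg | hg <;> rcases hs with rfl | rfl
    · exact .inr (by simpa using hg)
    · exact .inr (by simpa [mul_assoc] using H.mul_mem hg hdiv)
    · exact .inl (by simpa [mul_assoc] using H.mul_mem hg hsq)
    · exact .inl (by simpa [mul_assoc] using H.mul_mem hg hmul)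
  | mul_inv_cancel g _ s hs ih =>
    rcases ih with hg | hg <;> rcases hs with rfl | rfl
    · exact .inr (by simpa [mul_assoc] using H.mul_mem hg (H.inv_mem hsq))
    · exact .inr (by simpa [mul_assoc] using H.mul_mem hg (H.inv_mem hmul))
    · exact .inl hg
    · exact .inl (by simpa [mul_assoc] using H.mul_mem hg (H.inv_mem hdiv))

lemma closure_kerSq_kerDiv_kerMul (hgen : Subgroup.closure {a, t} = ⊤) :
    Subgroup.closure {kerSq ha, kerDiv ha ht, kerMul ha ht} = ⊤ := by
  set K := Subgroup.closure {kerSq ha, kerDiv ha ht, kerMul ha ht}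
  have hmem (k : θ.ker) (hk : k ∈ ({kerSq ha, kerDiv ha ht, kerMul ha ht} : Set θ.ker)) :
      (k : G) ∈ K.map θ.ker.subtype :=
    ⟨k, Subgroup.subset_closure hk, rfl⟩
  refine (Subgroup.eq_top_iff' K).2 fun k => ?_
  rcases mem_or_mul_inv_mem (a := a) hgen (hmem (kerSq ha) (by simp))
    (hmem (kerDiv ha ht) (by simp)) (hmem (kerMul ha ht) (by simp)) k with h | h
  · simpa using h
  · obtain ⟨l, -, hl⟩ := h
    have hθ := congrArg θ hl
    rw [map_mul, map_inv, ha, k.2, Subgroup.coe_subtype, l.2] at hθ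
    exact absurd hθ (by decide)

end IndexTwo

section Relations

/-- The equations satisfied by the images of `a²`, `t a⁻¹`, `a t` under a homomorphism from the
index-two subgroup of `BG (n + 2d) n`, for odd `n`, to an abelian group. -/
structure KerRelations {M : Type*} [AddCommGroup M] (d : ℤ) (x y z : M) : Prop where
  relator : (2 : ℤ) • (y - z) + (d + 2) • x = 0
  conj_relator : (2 : ℤ) • (z - y) + (d - 2) • x = 0

variable {G : Type*} [Group G] (a t : G) {m n d l : ℤ}

lemma lift_BGRel_eq (hm : m = n + 2 * d) (hn : n = 2 * l + 1) :
    FreeGroup.lift ![a, t] (BGRel m n) =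
      (t * a⁻¹) * (a * a) * (a * t)⁻¹ * (a * a) ^ (l + d + 1) * (t * a⁻¹) * (a * t)⁻¹ *
        (a * a) ^ (-l) := by
  subst hm hn
  simp only [BGRel, map_mul, map_inv, map_zpow, FreeGroup.lift_apply_of, Matrix.cons_val_zero,
    Matrix.cons_val_one, ← zpow_two]
  group

lemma conj_lift_BGRel_eq (hm : m = n + 2 * d) (hn : n = 2 * l + 1) :
    a * FreeGroup.lift ![a, t] (BGRel m n) * a⁻¹ =
      (a * t) * (t * a⁻¹)⁻¹ * (a * a) ^ (l + d) * (a * t) * (a * a)⁻¹ * (t * a⁻¹)⁻¹ *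
        (a * a) ^ (-l - 1) := by
  subst hm hn
  simp only [BGRel, map_mul, map_inv, map_zpow, FreeGroup.lift_apply_of, Matrix.cons_val_zero,
    Matrix.cons_val_one, ← zpow_two]
  group

lemma kerRelations_map {a t : G} {θ : G →* Multiplicative (ZMod 2)} {D : Type*} [CommGroup D]
    (ha : θ a = ofAdd 1) (ht : θ t = ofAdd 1) (hm : m = n + 2 * d) (hn : Odd n)
    (hrel : FreeGroup.lift ![a, t] (BGRel m n) = 1) (f : θ.ker →* D) :
    KerRelations d (ofMul (f (kerSq ha))) (ofMul (f (kerDiv ha ht)))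
      (ofMul (f (kerMul ha ht))) := by
  obtain ⟨l, hl⟩ := hn
  set x := kerSq ha
  set y := kerDiv ha ht
  set z := kerMul ha ht
  have hker : y * x * z⁻¹ * x ^ (l + d + 1) * y * z⁻¹ * x ^ (-l) = 1 :=
    Subtype.ext ((lift_BGRel_eq a t hm hl).symm.trans hrel)
  have hker_conj : z * y⁻¹ * x ^ (l + d) * z * x⁻¹ * y⁻¹ * x ^ (-l - 1) = 1 :=
    Subtype.ext ((conj_lift_BGRel_eq a t hm hl).symm.trans (by simp [hrel]))
  have h := congrArg (ofMul ∘ f) hker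
  have h_conj := congrArg (ofMul ∘ f) hker_conj
  simp only [Function.comp_apply, map_mul, map_inv, map_zpow, map_one, ofMul_mul, ofMul_inv,
    ofMul_zpow, ofMul_one] at h h_conj
  exact ⟨by linear_combination (norm := module) h, by linear_combination (norm := module) h_conj⟩

end Relations

section Wreath

variable {D Q : Type*} [Group D] [Group Q]

/-- The inclusion of the base group `Q → D` into the wreath product `D ≀ᵣ Q`. -/
def baseHom : (Q → D) →* D ≀ᵣ Q where
  toFun f := ⟨f, 1⟩
  map_one' := rfl
  map_mul' f g := by ext <;> simp

/-- The coordinate at `1` of a homomorphism to a wreath product, restricted to the kernel of its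
projection `θ` to the top group, where it is multiplicative. -/
def kerCoord {G : Type*} [Group G] (Φ : G →* D ≀ᵣ Q) (θ : G →* Q)
    (hΦ : ∀ g, (Φ g).right = θ g) : θ.ker →* D where
  toFun k := (Φ k).left 1
  map_one' := by simp
  map_mul' k l := by simp [hΦ, MonoidHom.mem_ker.1 k.2]

variable {M : Type*} [AddCommGroup M]

/-- The function on the two elements of `ℤ/2` with value `u` at the identity and `v` at the
other one. -/
def twoValued (u v : M) (q : Multiplicative (ZMod 2)) : Multiplicative M :=
  ofAdd (if q = 1 then u else v)

/-- The element `(u, v)σ` of `M ≀ ℤ/2`, where `σ` is the swap. The homomorphism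
`a ↦ (0, x)σ`, `t ↦ (y, z)σ` is the one induced from the homomorphism on the index-two subgroup
with values `x`, `y`, `z` at `a²`, `t a⁻¹`, `a t`. -/
def wreathSwap (u v : M) : Multiplicative M ≀ᵣ Multiplicative (ZMod 2) :=
  ⟨twoValued u v, ofAdd 1⟩

lemma forall_multiplicative_zmod_two {P : Multiplicative (ZMod 2) → Prop} :
    (∀ q, P q) ↔ P 1 ∧ P (ofAdd 1) := Fin.forall_fin_two

lemma wreathSwap_mul_wreathSwap (u v u' v' : M) :
    wreathSwap u v * wreathSwap u' v' = baseHom (twoValued (u + v') (v + u')) := by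
  have hright : (ofAdd 1 * ofAdd 1 : Multiplicative (ZMod 2)) = 1 := by decide
  refine RegularWreathProduct.ext (funext (forall_multiplicative_zmod_two.2 ?_)) hright
  simp [wreathSwap, baseHom, twoValued]

lemma wreathSwap_mul_wreathSwap_inv (u v u' v' : M) :
    wreathSwap u v * (wreathSwap u' v')⁻¹ = baseHom (twoValued (u - u') (v - v')) := by
  refine RegularWreathProduct.ext (funext (forall_multiplicative_zmod_two.2 ?_))
    (mul_inv_cancel (ofAdd 1))
  simp [wreathSwap, baseHom, twoValued, div_eq_mul_inv]

lemma lift_wreathSwap_BGRel {m n d : ℤ} (hm : m = n + 2 * d) (hn : Odd n) {x y z : M}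
    (h : KerRelations d x y z) :
    FreeGroup.lift ![wreathSwap 0 x, wreathSwap y z] (BGRel m n) = 1 := by
  obtain ⟨l, hl⟩ := hn
  rw [lift_BGRel_eq _ _ hm hl]
  simp only [wreathSwap_mul_wreathSwap, wreathSwap_mul_wreathSwap_inv, ← map_mul, ← map_inv,
    ← map_zpow]
  convert map_one baseHom
  refine funext (forall_multiplicative_zmod_two.2 ⟨toAdd.injective ?_, toAdd.injective ?_⟩) <;>
    simp only [Pi.mul_apply, Pi.inv_apply, Pi.pow_apply, Pi.one_apply, twoValued, ofAdd_eq_one,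
      one_ne_zero, ↓reduceIte, toAdd_mul, toAdd_inv, toAdd_zpow, toAdd_ofAdd, toAdd_one]
  · linear_combination (norm := module) h.relator
  · linear_combination (norm := module) h.conj_relator

end Wreath

section Presentation

variable {m n d : ℤ} {θ : BG m n →* Multiplicative (ZMod 2)} {M : Type*} [AddCommGroup M]

lemma closure_pair_eq_top :
    Subgroup.closure {(PresentedGroup.of 0 : BG m n), PresentedGroup.of 1} = ⊤ := by
  rw [← PresentedGroup.closure_range_of {BGRel m n}]
  congr 1
  ext g
  simp [Fin.exists_fin_two, eq_comm]

lemma lift_of_BGRel :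
    FreeGroup.lift ![(PresentedGroup.of 0 : BG m n), PresentedGroup.of 1] (BGRel m n) = 1 := by
  have hmk : FreeGroup.lift ![(PresentedGroup.of 0 : BG m n), PresentedGroup.of 1] =
      PresentedGroup.mk {BGRel m n} := by
    ext i
    fin_cases i <;> simp [PresentedGroup.of]
  rw [hmk]
  exact PresentedGroup.one_of_mem rfl

lemma exists_ker_hom (hm : m = n + 2 * d) (hn : Odd n) (ha : θ (PresentedGroup.of 0) = ofAdd 1)
    (ht : θ (PresentedGroup.of 1) = ofAdd 1) {x y z : M} (h : KerRelations d x y z) :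
    ∃ f : θ.ker →* Multiplicative M,
      f (kerSq ha) = ofAdd x ∧ f (kerDiv ha ht) = ofAdd y ∧ f (kerMul ha ht) = ofAdd z := by
  let Φ : BG m n →* Multiplicative M ≀ᵣ Multiplicative (ZMod 2) :=
    PresentedGroup.toGroup (f := ![wreathSwap 0 x, wreathSwap y z])
      (by rintro r rfl; exact lift_wreathSwap_BGRel hm hn h)
  have hΦa : Φ (PresentedGroup.of 0) = wreathSwap 0 x := PresentedGroup.toGroup.of _
  have hΦt : Φ (PresentedGroup.of 1) = wreathSwap y z := PresentedGroup.toGroup.of _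
  have hΦ : RegularWreathProduct.rightHom.comp Φ = θ := by
    refine PresentedGroup.ext (Fin.forall_fin_two.2 ⟨?_, ?_⟩)
    · simp [hΦa, ha, wreathSwap]
    · simp [hΦt, ht, wreathSwap]
  refine ⟨kerCoord Φ θ (DFunLike.congr_fun hΦ), ?_, ?_, ?_⟩
  · simp [kerCoord, kerSq, hΦa, wreathSwap, twoValued]
  · simp [kerCoord, kerDiv, hΦa, hΦt, wreathSwap, twoValued]
  · simp [kerCoord, kerMul, hΦa, hΦt, wreathSwap, twoValued]

end Presentation

section Torsion

variable {M : Type*} [AddCommGroup M] {d s e : ℤ} {x y z : M}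

lemma isCoprime_sub_two_two_mul (hd : Odd d) : IsCoprime (d - 2) (2 * d) := by
  obtain ⟨j, rfl⟩ := hd
  exact ⟨2 * j ^ 2 + 4 * j + 1, 1 - j - j ^ 2, by ring⟩

lemma KerRelations.four_mul_smul_eq_zero (h : KerRelations d x y z) :
    (4 * d) • (y - z) = 0 := by
  linear_combination (norm := module) (d - 2) • h.relator - (d + 2) • h.conj_relator

lemma KerRelations.smul_eq (h : KerRelations d x y z) (hs : s * (d - 2) + e * (2 * d) = 1) :
    (2 * s) • (y - z) = x := by
  have hx : (2 * d) • x = 0 := by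
    linear_combination (norm := module) h.relator + h.conj_relator
  have hsx : (s * (d - 2) + e * (2 * d)) • x = x := by rw [hs, one_smul]
  linear_combination (norm := module) hsx - e • hx - s • h.conj_relator

/-- The homomorphism `ℤ × ℤ/4|d| → M` sending the generators to `z` and `w`. -/
def ofIntProdZMod (z w : M) (hw : (4 * d) • w = 0) : ℤ × ZMod (4 * d.natAbs) →+ M :=
  AddMonoidHom.coprod (zmultiplesHom M z) (ZMod.lift _ ⟨zmultiplesHom M w, by
    rcases abs_choice d with hd | hd <;> simp [hd, hw]⟩)

lemma ofIntProdZMod_apply (z w : M) (hw : (4 * d) • w = 0) (i j : ℤ) :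
    ofIntProdZMod z w hw (i, j) = i • z + j • w := by
  simp [ofIntProdZMod]

lemma kerRelations_int_prod_zmod (hs : s * (d - 2) + e * (2 * d) = 1) :
    KerRelations (M := ℤ × ZMod (4 * d.natAbs)) d (0, (2 * s : ℤ)) (1, 1) (1, 0) := by
  have hd : ((4 * d : ℤ) : ZMod (4 * d.natAbs)) = 0 := by
    rw [ZMod.intCast_zmod_eq_zero_iff_dvd]
    exact mul_dvd_mul_left 4 (Int.natAbs_dvd.2 dvd_rfl)
  have hs' := congrArg (Int.cast : ℤ → ZMod (4 * d.natAbs)) hs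
  push_cast at hd hs'
  have hrelator : (2 + (d + 2) * (2 * s) : ZMod (4 * d.natAbs)) = 0 := by
    linear_combination (s + e) * hd - 2 * hs'
  have hconj_relator : (-2 + (d - 2) * (2 * s) : ZMod (4 * d.natAbs)) = 0 := by
    linear_combination 2 * hs' - e * hd
  exact ⟨Prod.ext (by simp) (by simpa using hrelator),
    Prod.ext (by simp) (by simpa using hconj_relator)⟩

lemma nonempty_abelianization_mulEquiv {K : Type*} [Group K] {x y z : K}
    (hgen : Subgroup.closure {x, y, z} = ⊤)
    (hrel : KerRelations d (ofMul (of x)) (ofMul (of y)) (ofMul (of z)))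
    (hs : s * (d - 2) + e * (2 * d) = 1) {f : K →* Multiplicative (ℤ × ZMod (4 * d.natAbs))}
    (hx : f x = ofAdd (0, ((2 * s : ℤ) : ZMod _))) (hy : f y = ofAdd (1, 1))
    (hz : f z = ofAdd (1, 0)) :
    Nonempty (Abelianization K ≃* Multiplicative (ℤ × ZMod (4 * d.natAbs))) := by
  let F := Abelianization.lift f
  let B := ofIntProdZMod (ofMul (of z)) (ofMul (of y) - ofMul (of z)) hrel.four_mul_smul_eq_zero
  have hB (i j : ℤ) : B (i, j) = i • ofMul (of z) + j • (ofMul (of y) - ofMul (of z)) :=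
    ofIntProdZMod_apply _ _ _ i j
  have hBx : B (0, (2 * s : ℤ)) = ofMul (of x) := by
    rw [hB, hrel.smul_eq hs, zero_smul, zero_add]
  have hBy : B (1, 1) = ofMul (of y) := by simpa using hB 1 1
  have hBz : B (1, 0) = ofMul (of z) := by simpa using hB 1 0
  refine ⟨MonoidHom.toMulEquiv F B.toMultiplicativeLeft ?_ ?_⟩
  · refine Abelianization.hom_ext _ _ (MonoidHom.eq_of_eqOn_dense hgen ?_)
    rintro k (rfl | rfl | rfl)
    · simpa [F, hx] using congrArg Additive.toMul hBx
    · simpa [F, hy] using congrArg Additive.toMul hBy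
    · simpa [F, hz] using congrArg Additive.toMul hBz
  · refine MonoidHom.ext (ofAdd.surjective.forall.2 fun ⟨i, j⟩ => ?_)
    obtain ⟨j, rfl⟩ := ZMod.intCast_surjective j
    apply toAdd.injective
    simp [F, hB, hy, hz]

end Torsion

end BG

open BG in
theorem stmt_15_general (m n d : ℤ) (hm : m = n + 2 * d) (hn : Odd n) (hd : Odd d)
    (θ : BG m n →* Multiplicative (ZMod 2))
    (hθa : θ (PresentedGroup.of 0) = Multiplicative.ofAdd 1)
    (hθt : θ (PresentedGroup.of 1) = Multiplicative.ofAdd 1) :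
    (MonoidHom.ker θ).index = 2 ∧
      Nonempty (Abelianization ↥(MonoidHom.ker θ) ≃*
        Multiplicative (ℤ × ZMod (4 * d.natAbs))) := by
  refine ⟨index_ker_eq_two hθa, ?_⟩
  obtain ⟨s, e, hs⟩ := isCoprime_sub_two_two_mul hd
  obtain ⟨f, hx, hy, hz⟩ := exists_ker_hom hm hn hθa hθt (kerRelations_int_prod_zmod hs)
  exact nonempty_abelianization_mulEquiv (closure_kerSq_kerDiv_kerMul hθa hθt closure_pair_eq_top)
    (kerRelations_map hθa hθt hm hn lift_of_BGRel Abelianization.of) hs hx hy hz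

theorem stmt_15 (p : ℤ) (hp : 1 ≤ p)
    (θ : BG (2 * p + 1) (2 * p - 1) →* Multiplicative (ZMod 2))
    (hθa : θ (PresentedGroup.of 0) = Multiplicative.ofAdd 1)
    (hθt : θ (PresentedGroup.of 1) = Multiplicative.ofAdd 1) :
    (MonoidHom.ker θ).index = 2 ∧
      Nonempty (Abelianization ↥(MonoidHom.ker θ) ≃* Multiplicative (ℤ × ZMod 4)) :=
  stmt_15_general _ _ 1 (by ring) ⟨p - 1, by ring⟩ odd_one θ hθa hθt
end
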